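/- arXiv:1307.4201 — 14 statements merged into one kernel-verified Lean document; each statement's English description precedes it below -/
import Mathlib

section
/- Let V be an Archimedean ordered real vector space, let u ∈ V with 0 ≤ u, and let τ be a state operator on the interval effect algebra [0,u]. Then for every real number α ∈ [0,1] and every a ∈ [0,u], the element α•a lies in [0,u] and τ(α•a) = α•τ(a). -/
section AdditiveOnUnitInterval

variable {V : Type*} [AddCommGroup V] {f : ℝ → V}

/-- A function additive on `[0,1]` commutes with multiplication by `n` as long as it stays
inside `[0,1]`. -/
theorem map_natCast_mul_of_additive_on_unitInterval
    (hf : ∀ s t : ℝ, 0 ≤ s → 0 ≤ t → s + t ≤ 1 → f (s + t) = f s + f t)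
    (n : ℕ) {t : ℝ} (ht : 0 ≤ t) (hnt : n * t ≤ 1) : f (n * t) = n • f t := by
  induction n with
  | zero => simpa using hf 0 0 le_rfl le_rfl (by norm_num)
  | succ n ih =>
    have hsplit : ((n + 1 : ℕ) : ℝ) * t = n * t + t := by push_cast; ring
    rw [hsplit] at hnt ⊢
    rw [hf _ _ (by positivity) ht hnt, ih (by linarith), succ_nsmul]

variable [Module ℝ V] [PartialOrder V] [IsOrderedAddMonoid V] [IsOrderedModule ℝ V]

/-- In an Archimedean ordered real vector space, an additive nonnegative function on `[0,1]`
is homogeneous. -/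
theorem eq_smul_map_one_of_additive_on_unitInterval
    (arch : ∀ x y : V, (∀ n : ℕ, n • x ≤ y) → x ≤ 0)
    (hf : ∀ s t : ℝ, 0 ≤ s → 0 ≤ t → s + t ≤ 1 → f (s + t) = f s + f t)
    (hpos : ∀ t : ℝ, 0 ≤ t → t ≤ 1 → 0 ≤ f t)
    {t : ℝ} (ht₀ : 0 ≤ t) (ht₁ : t ≤ 1) : f t = t • f 1 := by
  have hone : 0 ≤ f 1 := hpos 1 zero_le_one le_rfl
  have hle : ∀ s : ℝ, 0 ≤ s → s ≤ 1 → f s ≤ f 1 := fun s hs₀ hs₁ => by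
    have h := hf s (1 - s) hs₀ (by linarith) (by linarith)
    rw [add_sub_cancel] at h
    rw [h]
    exact le_add_of_nonneg_right (hpos _ (by linarith) (by linarith))
  have key : ∀ n : ℕ, ∃ s : ℝ, 0 ≤ s ∧ s ≤ 1 ∧ n • (f t - t • f 1) = f s - s • f 1 := by
    intro n
    rcases n.eq_zero_or_pos with rfl | hn
    · refine ⟨1, zero_le_one, le_rfl, by simp⟩
    have hn' : (0 : ℝ) < n := by exact_mod_cast hn
    set k := ⌊n * t⌋₊
    have hk : (k : ℝ) ≤ n * t := Nat.floor_le (by positivity)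
    have hk' : n * t < k + 1 := Nat.lt_floor_add_one _
    have hr : 0 ≤ t - k * (n : ℝ)⁻¹ := by
      rw [sub_nonneg, ← div_eq_mul_inv, div_le_iff₀ hn']
      linarith
    have hnr : n * (t - k * (n : ℝ)⁻¹) = n * t - k := by field_simp
    have hsplit := hf (k * (n : ℝ)⁻¹) (t - k * (n : ℝ)⁻¹) (by positivity) hr (by linarith)
    rw [add_sub_cancel, map_natCast_mul_of_additive_on_unitInterval hf k (by positivity)
      (by linarith)] at hsplit
    have hinv := map_natCast_mul_of_additive_on_unitInterval hf n (t := (n : ℝ)⁻¹)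
      (by positivity) (mul_inv_cancel₀ hn'.ne').le
    have hrem := map_natCast_mul_of_additive_on_unitInterval hf n hr (by linarith)
    rw [mul_inv_cancel₀ hn'.ne'] at hinv
    rw [hnr] at hrem
    refine ⟨n * t - k, by linarith, by linarith, ?_⟩
    rw [hrem, hsplit, nsmul_sub, nsmul_add, smul_comm n k, ← hinv, sub_smul, mul_smul,
      Nat.cast_smul_eq_nsmul, Nat.cast_smul_eq_nsmul]
    abel
  rw [← sub_eq_zero]
  apply le_antisymm
  · refine arch _ (f 1) fun n => ?_
    obtain ⟨s, hs₀, hs₁, hs⟩ := key n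
    rw [hs]
    exact (sub_le_self _ (smul_nonneg hs₀ hone)).trans (hle s hs₀ hs₁)
  · rw [← neg_nonpos]
    refine arch _ (f 1) fun n => ?_
    obtain ⟨s, hs₀, hs₁, hs⟩ := key n
    rw [smul_neg, hs, neg_sub]
    exact (sub_le_self _ (hpos s hs₀ hs₁)).trans (smul_le_of_le_one_left hone hs₁)

end AdditiveOnUnitInterval


/-- Let `V` be an Archimedean ordered real vector space, `u ∈ V` with `0 ≤ u`,
and `τ` a state operator on the interval effect algebra `[0,u]`. Then for every `α ∈ [0,1]`
and every `a ∈ [0,u]`, the element `α • a` lies in `[0,u]` and `τ (α • a) = α • τ a`. -/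
theorem stateOperator_smul
    (V : Type*) [AddCommGroup V] [PartialOrder V]
    [CovariantClass V V (· + ·) (· ≤ ·)] [Module ℝ V]
    (smul_nonneg' : ∀ (c : ℝ) (x : V), 0 ≤ c → 0 ≤ x → 0 ≤ c • x)
    (arch : ∀ x y : V, (∀ n : ℕ, n • x ≤ y) → x ≤ 0)
    (u : V) (hu : 0 ≤ u)
    (τ : V → V)
    (hmaps : ∀ a ∈ Set.Icc (0 : V) u, τ a ∈ Set.Icc (0 : V) u)
    (hunit : τ u = u)
    (hadd : ∀ a ∈ Set.Icc (0 : V) u, ∀ b ∈ Set.Icc (0 : V) u,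
      a + b ∈ Set.Icc (0 : V) u → τ (a + b) = τ a + τ b)
    (hidem : ∀ a ∈ Set.Icc (0 : V) u, τ (τ a) = τ a) :
    ∀ α ∈ Set.Icc (0 : ℝ) 1, ∀ a ∈ Set.Icc (0 : V) u,
      α • a ∈ Set.Icc (0 : V) u ∧ τ (α • a) = α • τ a := by
  have : IsOrderedAddMonoid V :=
    { add_le_add_left := fun a b h c => by
        simpa only [add_comm _ c] using CovariantClass.elim (μ := ((· + ·) : V → V → V)) c h }
  have : IsOrderedModule ℝ V := .of_smul_nonneg fun c hc x hx => smul_nonneg' c x hc hx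
  intro α hα a ha
  have hmem : ∀ t : ℝ, 0 ≤ t → t ≤ 1 → t • a ∈ Set.Icc (0 : V) u := fun t ht₀ ht₁ =>
    ⟨smul_nonneg ht₀ ha.1, (smul_le_of_le_one_left ha.1 ht₁).trans ha.2⟩
  refine ⟨hmem α hα.1 hα.2, ?_⟩
  have h := eq_smul_map_one_of_additive_on_unitInterval (f := fun t : ℝ => τ (t • a)) arch
    (fun s t hs ht hst => by
      have hsum := hmem (s + t) (by linarith) hst
      simp only [add_smul] at hsum ⊢
      exact hadd _ (hmem s hs (by linarith)) _ (hmem t ht (by linarith)) hsum)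
    (fun t ht₀ ht₁ => (hmaps _ (hmem t ht₀ ht₁)).1) hα.1 hα.2
  simpa only [one_smul] using h
end

section
/- Let V be an Archimedean ordered real vector space and let u be an order unit of V, i.e., 0 ≤ u and for every x ∈ V there exists a natural number n with x ≤ n•u. Let τ be a state operator on the interval effect algebra [0,u]. Then there exists an ℝ-linear map p : V → V such that p is positive (0 ≤ x implies 0 ≤ p(x)), idempotent (p(p(x)) = p(x) for all x ∈ V), and p(a) = τ(a) for every a ∈ [0,u]. -/
/-- A map that is additive on the positive cone of a directed ordered group extends to an
additive map on the whole group. -/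
lemma exists_addMonoidHom_of_add_on_nonneg {V W : Type*} [AddCommGroup V] [PartialOrder V]
    [IsOrderedAddMonoid V] [AddCommGroup W]
    (hdir : ∀ x : V, ∃ k : V, 0 ≤ k ∧ 0 ≤ x + k) (q : V → W)
    (hq : ∀ x y : V, 0 ≤ x → 0 ≤ y → q (x + y) = q x + q y) :
    ∃ p : V →+ W, ∀ x : V, 0 ≤ x → p x = q x := by
  choose k hk hxk using hdir
  have spec : ∀ x l : V, 0 ≤ l → 0 ≤ x + l → q (x + k x) - q (k x) = q (x + l) - q l := by
    intro x l hl hxl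
    rw [sub_eq_sub_iff_add_eq_add, ← hq _ _ (hxk x) hl, ← hq _ _ hxl (hk x)]
    congr 1
    abel
  refine ⟨AddMonoidHom.mk' (fun x => q (x + k x) - q (k x)) fun x y => ?_, fun x hx => ?_⟩
  · have hsum : x + y + (k x + k y) = (x + k x) + (y + k y) := by abel
    rw [spec (x + y) (k x + k y) (add_nonneg (hk x) (hk y))
      (hsum ▸ add_nonneg (hxk x) (hxk y)), hsum, hq _ _ (hxk x) (hxk y), hq _ _ (hk x) (hk y)]
    abel
  · have hq0 : q 0 = 0 := by simpa using hq 0 0 le_rfl le_rfl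
    simpa [hq0] using spec x 0 le_rfl (by simpa using hx)

/-- A positive additive map from a directed ordered real vector space to an Archimedean one is
homogeneous. -/
lemma AddMonoidHom.map_real_smul_of_nonneg {V W : Type*}
    [AddCommGroup V] [PartialOrder V] [IsOrderedAddMonoid V] [Module ℝ V] [IsOrderedModule ℝ V]
    [AddCommGroup W] [PartialOrder W] [IsOrderedAddMonoid W] [Module ℝ W] [IsOrderedModule ℝ W]
    (arch : ∀ x y : W, (∀ n : ℕ, n • x ≤ y) → x ≤ 0)
    (hdir : ∀ x : V, ∃ k : V, 0 ≤ k ∧ 0 ≤ x + k)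
    (p : V →+ W) (hp : ∀ x : V, 0 ≤ x → 0 ≤ p x) (c : ℝ) (x : V) :
    p (c • x) = c • p x := by
  have upper : ∀ (c : ℝ) (x : V), 0 ≤ x → p (c • x) ≤ c • p x := by
    intro c x hx
    rw [← sub_nonpos]
    refine arch _ (p x) fun n => ?_
    have hle : (n * c) • x ≤ (⌊n * c⌋ + 1) • x := by
      rw [← Int.cast_smul_eq_zsmul ℝ]
      exact smul_le_smul_of_nonneg_right (by push_cast; exact (Int.lt_floor_add_one _).le) hx
    have hmono : p ((n * c) • x) ≤ p ((⌊n * c⌋ + 1) • x) := by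
      rw [← sub_nonneg, ← map_sub]
      exact hp _ (sub_nonneg.2 hle)
    have hfloor : (⌊n * c⌋ + 1) • p x ≤ (n * c + 1) • p x := by
      rw [← Int.cast_smul_eq_zsmul ℝ]
      exact smul_le_smul_of_nonneg_right
        (by push_cast; exact add_le_add_left (Int.floor_le _) 1) (hp x hx)
    have hn : p ((n * c) • x) = n • p (c • x) := by
      rw [mul_smul, Nat.cast_smul_eq_nsmul, map_nsmul]
    rw [map_zsmul, hn] at hmono
    have h := hmono.trans hfloor
    rw [add_smul, one_smul, mul_smul, Nat.cast_smul_eq_nsmul] at h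
    rw [nsmul_sub]
    exact sub_le_iff_le_add'.2 h
  have key : ∀ (c : ℝ) (x : V), 0 ≤ x → p (c • x) = c • p x := by
    intro c x hx
    refine (upper c x hx).antisymm ?_
    simpa using upper (-c) x hx
  obtain ⟨k, hk, hxk⟩ := hdir x
  have h := key c _ hxk
  rw [smul_add, map_add, map_add, smul_add, key c k hk] at h
  exact add_right_cancel h

/-- A map that is additive on the interval `[0, u]` below an order unit `u` extends to an additive
map on the positive cone. -/
lemma exists_add_on_nonneg_of_add_on_Icc {V W : Type*}
    [AddCommGroup V] [PartialOrder V] [IsOrderedAddMonoid V] [Module ℝ V] [IsOrderedModule ℝ V]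
    [AddCommGroup W] [Module ℝ W]
    (u : V) (hu : 0 ≤ u) (hunit : ∀ x : V, ∃ n : ℕ, x ≤ n • u) (τ : V → W)
    (hadd : ∀ a ∈ Set.Icc (0 : V) u, ∀ b ∈ Set.Icc (0 : V) u,
      a + b ∈ Set.Icc (0 : V) u → τ (a + b) = τ a + τ b) :
    ∃ q : V → W, (∀ x y : V, 0 ≤ x → 0 ≤ y → q (x + y) = q x + q y) ∧
      ∀ a ∈ Set.Icc (0 : V) u, q a = τ a := by
  have hτ0 : τ 0 = 0 := by
    have h0 : (0 : V) ∈ Set.Icc 0 u := ⟨le_rfl, hu⟩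
    simpa using hadd 0 h0 0 h0 (by simpa using h0)
  have hτnsmul : ∀ (n : ℕ) (a : V), 0 ≤ a → n • a ≤ u → τ (n • a) = n • τ a := by
    intro n a ha
    induction n with
    | zero => simp [hτ0]
    | succ n ih =>
      intro hn
      have hna := nsmul_nonneg ha n
      rw [succ_nsmul] at hn ⊢
      have hnu : n • a ≤ u := (le_add_of_nonneg_right ha).trans hn
      rw [hadd _ ⟨hna, hnu⟩ _ ⟨ha, (le_add_of_nonneg_left hna).trans hn⟩ ⟨add_nonneg hna ha, hn⟩,
        ih hnu, succ_nsmul]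
  have hscale : ∀ (n : ℕ) (x : V), 0 < n → 0 ≤ x → x ≤ n • u →
      (n : ℝ)⁻¹ • x ∈ Set.Icc (0 : V) u := by
    intro n x hn hx hxn
    have hn' : (0 : ℝ) < n := Nat.cast_pos.2 hn
    refine ⟨smul_nonneg (inv_nonneg.2 hn'.le) hx, ?_⟩
    rw [inv_smul_le_iff_of_pos hn', Nat.cast_smul_eq_nsmul]
    exact hxn
  have hrefine : ∀ (m n : ℕ) (x : V), 0 < m → 0 < n → 0 ≤ x → x ≤ n • u →
      n • τ ((n : ℝ)⁻¹ • x) = (m * n) • τ (((m * n : ℕ) : ℝ)⁻¹ • x) := by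
    intro m n x hm hn hx hxn
    have hm' : (m : ℝ) ≠ 0 := Nat.cast_ne_zero.2 hm.ne'
    have heq : (n : ℝ)⁻¹ • x = m • (((m * n : ℕ) : ℝ)⁻¹ • x) := by
      rw [← Nat.cast_smul_eq_nsmul ℝ, smul_smul, Nat.cast_mul, mul_inv, mul_inv_cancel_left₀ hm']
    have hmem := hscale n x hn hx hxn
    rw [heq] at hmem ⊢
    rw [hτnsmul m _ (smul_nonneg (by positivity) hx) hmem.2, mul_comm m n, mul_nsmul']
  have hpos : ∀ x : V, ∃ n : ℕ, 0 < n ∧ x ≤ n • u := by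
    intro x
    obtain ⟨n, hn⟩ := hunit x
    exact ⟨n + 1, n.succ_pos, hn.trans (nsmul_le_nsmul_left hu n.le_succ)⟩
  choose N hN hxN using hpos
  have spec : ∀ (m : ℕ) (x : V), 0 < m → 0 ≤ x → x ≤ m • u →
      N x • τ ((N x : ℝ)⁻¹ • x) = m • τ ((m : ℝ)⁻¹ • x) := by
    intro m x hm hx hxm
    rw [hrefine m (N x) x hm (hN x) hx (hxN x), hrefine (N x) m x (hN x) hm hx hxm, mul_comm]
  refine ⟨fun x => N x • τ ((N x : ℝ)⁻¹ • x), fun x y hx hy => ?_, fun a ha => ?_⟩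
  · have hM : 0 < N x + N y := Nat.add_pos_left (hN x) _
    have hxy : x + y ≤ (N x + N y) • u := by
      rw [add_nsmul]
      exact add_le_add (hxN x) (hxN y)
    have hxM := (le_add_of_nonneg_right hy).trans hxy
    have hyM := (le_add_of_nonneg_left hx).trans hxy
    have hmem := hscale _ _ hM (add_nonneg hx hy) hxy
    simp only
    rw [spec _ _ hM (add_nonneg hx hy) hxy, spec _ _ hM hx hxM, spec _ _ hM hy hyM, smul_add,
      hadd _ (hscale _ _ hM hx hxM) _ (hscale _ _ hM hy hyM) (smul_add (_ : ℝ) x y ▸ hmem),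
      nsmul_add]
  · simpa using spec 1 a one_pos ha.1 (by simpa using ha.2)

/-- Every nonnegative vector is a natural multiple of a vector below a given order unit. -/
lemma exists_nsmul_mem_Icc_of_nonneg {V : Type*}
    [AddCommGroup V] [PartialOrder V] [IsOrderedAddMonoid V] [Module ℝ V] [IsOrderedModule ℝ V]
    (u : V) (hu : 0 ≤ u) (hunit : ∀ x : V, ∃ n : ℕ, x ≤ n • u) (x : V) (hx : 0 ≤ x) :
    ∃ n : ℕ, ∃ a ∈ Set.Icc (0 : V) u, x = n • a := by
  obtain ⟨n, hn⟩ := hunit x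
  have hpos : (0 : ℝ) < (n + 1 : ℕ) := Nat.cast_pos.2 n.succ_pos
  refine ⟨n + 1, ((n + 1 : ℕ) : ℝ)⁻¹ • x, ⟨smul_nonneg (inv_nonneg.2 hpos.le) hx, ?_⟩, ?_⟩
  · rw [inv_smul_le_iff_of_pos hpos, Nat.cast_smul_eq_nsmul]
    exact hn.trans (nsmul_le_nsmul_left hu n.le_succ)
  · rw [← Nat.cast_smul_eq_nsmul ℝ, smul_inv_smul₀ hpos.ne']


/-- A state operator on the interval effect algebra `[0,u]` of an Archimedean
ordered real vector space with order unit `u` extends to a positive idempotent `ℝ`-linear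
map `p : V → V`. -/
theorem stateOperator_extends_to_linear
    (V : Type*) [AddCommGroup V] [PartialOrder V]
    [CovariantClass V V (· + ·) (· ≤ ·)] [Module ℝ V]
    (smul_nonneg' : ∀ (c : ℝ) (x : V), 0 ≤ c → 0 ≤ x → 0 ≤ c • x)
    (arch : ∀ x y : V, (∀ n : ℕ, n • x ≤ y) → x ≤ 0)
    (u : V) (hu : 0 ≤ u)
    (hunit_order : ∀ x : V, ∃ n : ℕ, x ≤ n • u)
    (τ : V → V)
    (hmaps : ∀ a ∈ Set.Icc (0 : V) u, τ a ∈ Set.Icc (0 : V) u)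
    (hunit : τ u = u)
    (hadd : ∀ a ∈ Set.Icc (0 : V) u, ∀ b ∈ Set.Icc (0 : V) u,
      a + b ∈ Set.Icc (0 : V) u → τ (a + b) = τ a + τ b)
    (hidem : ∀ a ∈ Set.Icc (0 : V) u, τ (τ a) = τ a) :
    ∃ p : V →ₗ[ℝ] V,
      (∀ x : V, 0 ≤ x → 0 ≤ p x) ∧
      (∀ x : V, p (p x) = p x) ∧
      (∀ a ∈ Set.Icc (0 : V) u, p a = τ a) := by
  have : IsOrderedAddMonoid V :=
    { add_le_add_left := fun a b hab c => by
        rw [add_comm a, add_comm b]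
        exact CovariantClass.elim c hab }
  have : IsOrderedModule ℝ V := IsOrderedModule.of_smul_nonneg fun c hc x hx =>
    smul_nonneg' c x hc hx
  have hdir : ∀ x : V, ∃ k : V, 0 ≤ k ∧ 0 ≤ x + k := by
    intro x
    obtain ⟨n, hn⟩ := hunit_order (-x)
    exact ⟨n • u, nsmul_nonneg hu n, neg_le_iff_add_nonneg'.1 hn⟩
  obtain ⟨q, hq, hqτ⟩ := exists_add_on_nonneg_of_add_on_Icc u hu hunit_order τ hadd
  obtain ⟨p, hpq⟩ := exists_addMonoidHom_of_add_on_nonneg hdir q hq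
  have hpτ : ∀ a ∈ Set.Icc (0 : V) u, p a = τ a := fun a ha => (hpq a ha.1).trans (hqτ a ha)
  have hpos : ∀ x : V, 0 ≤ x → 0 ≤ p x := by
    intro x hx
    obtain ⟨n, a, ha, rfl⟩ := exists_nsmul_mem_Icc_of_nonneg u hu hunit_order x hx
    rw [map_nsmul, hpτ a ha]
    exact nsmul_nonneg (hmaps a ha).1 n
  let P : V →ₗ[ℝ] V :=
    { p with map_smul' := p.map_real_smul_of_nonneg arch hdir hpos }
  have hP : ∀ x, P x = p x := fun _ => rfl
  have hidem_nonneg : ∀ x : V, 0 ≤ x → P (P x) = P x := by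
    intro x hx
    obtain ⟨n, a, ha, rfl⟩ := exists_nsmul_mem_Icc_of_nonneg u hu hunit_order x hx
    rw [map_nsmul, map_nsmul, hP a, hpτ a ha, hP, hpτ _ (hmaps a ha), hidem a ha]
  refine ⟨P, hpos, fun x => ?_, hpτ⟩
  obtain ⟨k, hk, hxk⟩ := hdir x
  have h := hidem_nonneg _ hxk
  rw [map_add, map_add, hidem_nonneg k hk] at h
  exact add_right_cancel h
end

section
/- Let V be an Archimedean ordered real vector space, let u be an order unit of V (0 ≤ u and for every x ∈ V there exists a natural number n with x ≤ n•u), and let τ be a state operator on [0,u] that is strong, meaning: for all a, b ∈ [0,u], if c ∈ V is the greatest lower bound in V of the set {τ(a), τ(b)}, then c ∈ [0,u] and τ(c) = c. Let p : V → V be a positive idempotent ℝ-linear map extending τ (p(a) = τ(a) for a ∈ [0,u]). Then for all x, y ∈ V with 0 ≤ x and 0 ≤ y, if z ∈ V is the greatest lower bound in V of the set {p(x), p(y)}, then p(z) = z. -/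
open scoped Pointwise in
/-- Scaling by a positive scalar preserves greatest lower bounds. -/
theorem IsGLB.smul_of_pos {𝕜 E : Type*} [Field 𝕜] [LinearOrder 𝕜] [IsStrictOrderedRing 𝕜]
    [AddCommGroup E] [PartialOrder E] [IsOrderedAddMonoid E] [Module 𝕜 E] [PosSMulMono 𝕜 E]
    {s : Set E} {a : E} (h : IsGLB s a) {c : 𝕜} (hc : 0 < c) : IsGLB (c • s) (c • a) :=
  (OrderIso.smulRight hc).isGLB_image'.mpr h

/-- If `τ` is a strong state operator on `[0,u]` and `p` is a positive idempotent
linear extension of `τ`, then `p` preserves existing infima of pairs of images of positive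
elements: whenever `z` is the greatest lower bound in `V` of `{p x, p y}` with `x, y ≥ 0`,
we have `p z = z`. -/
theorem strong_stateOperator_extension_preserves_inf
    (V : Type*) [AddCommGroup V] [PartialOrder V]
    [CovariantClass V V (· + ·) (· ≤ ·)] [Module ℝ V]
    (smul_nonneg' : ∀ (c : ℝ) (x : V), 0 ≤ c → 0 ≤ x → 0 ≤ c • x)
    (arch : ∀ x y : V, (∀ n : ℕ, n • x ≤ y) → x ≤ 0)
    (u : V) (hu : 0 ≤ u)
    (hunit_order : ∀ x : V, ∃ n : ℕ, x ≤ n • u)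
    (τ : V → V)
    (hmaps : ∀ a ∈ Set.Icc (0 : V) u, τ a ∈ Set.Icc (0 : V) u)
    (hunit : τ u = u)
    (hadd : ∀ a ∈ Set.Icc (0 : V) u, ∀ b ∈ Set.Icc (0 : V) u,
      a + b ∈ Set.Icc (0 : V) u → τ (a + b) = τ a + τ b)
    (hidem : ∀ a ∈ Set.Icc (0 : V) u, τ (τ a) = τ a)
    (hstrong : ∀ a ∈ Set.Icc (0 : V) u, ∀ b ∈ Set.Icc (0 : V) u, ∀ c : V,
      IsGLB {τ a, τ b} c → c ∈ Set.Icc (0 : V) u ∧ τ c = c)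
    (p : V →ₗ[ℝ] V)
    (hpos : ∀ x : V, 0 ≤ x → 0 ≤ p x)
    (hpidem : ∀ x : V, p (p x) = p x)
    (hext : ∀ a ∈ Set.Icc (0 : V) u, p a = τ a) :
    ∀ x y : V, 0 ≤ x → 0 ≤ y → ∀ z : V, IsGLB {p x, p y} z → p z = z := by
  have : IsOrderedAddMonoid V :=
    { add_le_add_left := fun _ _ h c => by
        simpa [add_comm] using CovariantClass.elim (μ := fun a b : V => a + b)
          (r := fun a b : V => a ≤ b) c h }
  have : PosSMulMono ℝ V := PosSMulMono.of_smul_nonneg fun c hc x hx => smul_nonneg' c x hc hx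
  intro x y hx hy z hz
  obtain ⟨n, hn⟩ := hunit_order x
  obtain ⟨m, hm⟩ := hunit_order y
  have hN : (0 : ℝ) < ((n + m + 1 : ℕ) : ℝ) := by positivity
  have hr : (0 : ℝ) < ((n + m + 1 : ℕ) : ℝ)⁻¹ := inv_pos.mpr hN
  have smul_mem : ∀ (w : V) (k : ℕ), 0 ≤ w → w ≤ k • u → k ≤ n + m + 1 →
      ((n + m + 1 : ℕ) : ℝ)⁻¹ • w ∈ Set.Icc (0 : V) u := by
    intro w k hw hwk hk
    refine ⟨smul_nonneg' _ _ hr.le hw, ?_⟩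
    rw [inv_smul_le_iff_of_pos hN, Nat.cast_smul_eq_nsmul]
    exact hwk.trans (nsmul_le_nsmul_left hu hk)
  have hxr := smul_mem x n hx hn (by omega)
  have hyr := smul_mem y m hy hm (by omega)
  have hglb := hz.smul_of_pos hr
  rw [← Set.image_smul, Set.image_pair, ← map_smul, ← map_smul, hext _ hxr, hext _ hyr] at hglb
  obtain ⟨hmem, hfix⟩ := hstrong _ hxr _ hyr _ hglb
  rw [← hext _ hmem, map_smul] at hfix
  exact smul_right_injective V hr.ne' hfix
end

section
/- Let G be a partially ordered additive commutative group, let u ∈ G with 0 ≤ u, and let E = {x ∈ G : 0 ≤ x ≤ u}. Let τ : E → E satisfy τ(u) = u, τ(a+b) = τ(a)+τ(b) whenever a, b and a+b all lie in E, and τ(τ(a)) = τ(a) for all a ∈ E. Assume τ is faithful, i.e., for a ∈ E, τ(a) = 0 implies a = 0. Then τ is strong: for all a, b ∈ E, if c ∈ E is the greatest lower bound of {τ(a), τ(b)} within the partially ordered set E, then τ(c) = c. -/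
/-- A faithful state operator on the interval effect algebra `E = [0,u]` of a
partially ordered abelian group is strong: if `c ∈ E` is the greatest lower bound of
`{τ a, τ b}` within the poset `E`, then `τ c = c`. -/
theorem faithful_stateOperator_is_strong
    (G : Type*) [AddCommGroup G] [PartialOrder G]
    [CovariantClass G G (· + ·) (· ≤ ·)]
    (u : G) (hu : 0 ≤ u)
    (τ : G → G)
    (hmaps : ∀ a ∈ Set.Icc (0 : G) u, τ a ∈ Set.Icc (0 : G) u)
    (hunit : τ u = u)
    (hadd : ∀ a ∈ Set.Icc (0 : G) u, ∀ b ∈ Set.Icc (0 : G) u,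
      a + b ∈ Set.Icc (0 : G) u → τ (a + b) = τ a + τ b)
    (hidem : ∀ a ∈ Set.Icc (0 : G) u, τ (τ a) = τ a)
    (hfaithful : ∀ a ∈ Set.Icc (0 : G) u, τ a = 0 → a = 0) :
    ∀ a ∈ Set.Icc (0 : G) u, ∀ b ∈ Set.Icc (0 : G) u, ∀ c ∈ Set.Icc (0 : G) u,
      (c ≤ τ a ∧ c ≤ τ b ∧
        ∀ d ∈ Set.Icc (0 : G) u, d ≤ τ a → d ≤ τ b → d ≤ c) →
      τ c = c := by
  have hsub : ∀ x ∈ Set.Icc (0 : G) u, ∀ y ∈ Set.Icc (0 : G) u, x ≤ y →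
      y - x ∈ Set.Icc (0 : G) u ∧ τ y = τ x + τ (y - x) := by
    intro x hx y hy hxy
    have hmem : y - x ∈ Set.Icc (0 : G) u :=
      ⟨sub_nonneg.mpr hxy, (sub_le_self y hx.1).trans hy.2⟩
    have h := hadd x hx (y - x) hmem (by rwa [add_sub_cancel])
    rw [add_sub_cancel] at h
    exact ⟨hmem, h⟩
  have hbelow : ∀ x ∈ Set.Icc (0 : G) u, ∀ y ∈ Set.Icc (0 : G) u, x ≤ τ y → τ x ≤ τ y := by
    intro x hx y hy hxy
    obtain ⟨hmem, h⟩ := hsub x hx (τ y) (hmaps y hy) hxy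
    rw [hidem y hy] at h
    rw [h]
    exact le_add_of_nonneg_right (hmaps _ hmem).1
  intro a ha b hb c hc ⟨hca, hcb, hglb⟩
  have hle : τ c ≤ c := hglb (τ c) (hmaps c hc) (hbelow c hc a ha hca) (hbelow c hc b hb hcb)
  obtain ⟨hmem, h⟩ := hsub (τ c) (hmaps c hc) c hc hle
  rw [hidem c hc, left_eq_add] at h
  exact (sub_eq_zero.mp (hfaithful _ hmem h)).symm
end

section
/- Let A be a unital C*-algebra and let p : A → A be a linear map that is positive (0 ≤ x implies 0 ≤ p(x)), unital (p(1) = 1), and satisfies the Kadison–Schwarz inequality: (p(a))² ≤ p(a²) for every self-adjoint a ∈ A. Then for any fixed self-adjoint a ∈ A, the following are equivalent: (a) p(a²) = (p(a))²; (b) p((ab+ba)/2) = (p(a)p(b)+p(b)p(a))/2 for every self-adjoint b ∈ A; (c) p(aba) = p(a)p(b)p(a) for every self-adjoint b ∈ A. -/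
section CStarAlgebra

variable {A : Type*} [CStarAlgebra A] [PartialOrder A] [StarOrderedRing A]

theorem nonneg_of_forall_nonneg_smul_add {x y : A}
    (h : ∀ t : ℝ, 0 < t → 0 ≤ t • x + y) : 0 ≤ x := by
  have hlim : Filter.Tendsto (fun n : ℕ => x + (1 / ((n : ℝ) + 1)) • y) Filter.atTop (nhds x) := by
    simpa using ((tendsto_one_div_add_atTop_nhds_zero_nat (𝕜 := ℝ)).smul_const y).const_add x
  refine ge_of_tendsto' hlim fun n => ?_
  have hn : (0 : ℝ) < (n : ℝ) + 1 := by positivity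
  have := smul_nonneg (one_div_pos.mpr hn).le (h _ hn)
  rwa [smul_add, smul_smul, one_div_mul_cancel hn.ne', one_smul] at this

theorem eq_zero_of_forall_nonneg_smul_add {x y : A}
    (h : ∀ t : ℝ, 0 ≤ t • x + y) : x = 0 := by
  refine le_antisymm ?_ (nonneg_of_forall_nonneg_smul_add fun t _ => h t)
  rw [← neg_nonneg]
  refine nonneg_of_forall_nonneg_smul_add (y := y) fun t _ => ?_
  simpa using h (-t)

/-- If the Kadison–Schwarz inequality is an equality at `a`, then `p` respects anticommutators
with `a`. -/
theorem map_mul_add_mul_of_map_sq_eq {p : A →ₗ[ℂ] A}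
    (hKS : ∀ a : A, IsSelfAdjoint a → (p a) ^ 2 ≤ p (a ^ 2))
    {a : A} (ha : IsSelfAdjoint a) (hpa : p (a ^ 2) = (p a) ^ 2)
    {b : A} (hb : IsSelfAdjoint b) :
    p (a * b + b * a) = p a * p b + p b * p a := by
  rw [← sub_eq_zero]
  refine eq_zero_of_forall_nonneg_smul_add (y := p (b ^ 2) - (p b) ^ 2) fun t => ?_
  have key := sub_nonneg.mpr (hKS (t • a + b) (((IsSelfAdjoint.all t).smul ha).add hb))
  have hsq (x y : A) : (t • x + y) ^ 2 = (t * t) • x ^ 2 + t • (x * y + y * x) + y ^ 2 := by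
    simp only [sq, add_mul, mul_add, smul_mul_assoc, mul_smul_comm, smul_add, smul_smul]
    abel
  have hsmul (s : ℝ) (x : A) : p (s • x) = s • p x := p.map_smul_of_tower s x
  rw [hsq, map_add, map_add, map_add p (t • a), hsmul, hsmul, hsmul, hsq, hpa] at key
  convert key using 1
  rw [smul_sub]
  abel

theorem map_sq_sq_of_map_sq_eq {p : A →ₗ[ℂ] A}
    (hKS : ∀ a : A, IsSelfAdjoint a → (p a) ^ 2 ≤ p (a ^ 2))
    {a : A} (ha : IsSelfAdjoint a) (hpa : p (a ^ 2) = (p a) ^ 2) :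
    p ((a ^ 2) ^ 2) = (p (a ^ 2)) ^ 2 := by
  have hpow (n : ℕ) (hn : p (a ^ n) = p a ^ n) : p (a ^ (n + 1)) = p a ^ (n + 1) := by
    have h := map_mul_add_mul_of_map_sq_eq hKS ha hpa (ha.pow n)
    rw [hn, ← pow_succ', ← pow_succ, ← pow_succ', ← pow_succ, map_add, ← two_smul ℂ,
      ← two_smul ℂ (p a ^ (n + 1))] at h
    exact smul_right_injective A (two_ne_zero' ℂ) h
  rw [hpa, ← pow_mul, ← pow_mul]
  exact hpow 3 (hpow 2 hpa)

theorem map_mul_mul_of_map_sq_eq {p : A →ₗ[ℂ] A}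
    (hKS : ∀ a : A, IsSelfAdjoint a → (p a) ^ 2 ≤ p (a ^ 2))
    {a : A} (ha : IsSelfAdjoint a) (hpa : p (a ^ 2) = (p a) ^ 2)
    {b : A} (hb : IsSelfAdjoint b) :
    p (a * b * a) = p a * p b * p a := by
  have hab : IsSelfAdjoint (a * b + b * a) := by
    simp [isSelfAdjoint_iff, ha.star_eq, hb.star_eq, add_comm]
  have hJ := map_mul_add_mul_of_map_sq_eq hKS ha hpa hab
  have hS := map_mul_add_mul_of_map_sq_eq hKS (ha.pow 2) (map_sq_sq_of_map_sq_eq hKS ha hpa) hb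
  rw [map_mul_add_mul_of_map_sq_eq hKS ha hpa hb] at hJ
  rw [hpa] at hS
  have hid (x y : A) : (2 : ℂ) • (x * y * x) =
      (x * (x * y + y * x) + (x * y + y * x) * x) - (x ^ 2 * y + y * x ^ 2) := by
    rw [two_smul]
    noncomm_ring
  apply smul_right_injective A (two_ne_zero' ℂ)
  change (2 : ℂ) • p (a * b * a) = (2 : ℂ) • (p a * p b * p a)
  rw [← map_smul, hid, hid, map_sub, hJ, hS]

end CStarAlgebra

/-- For a positive unital linear map `p` on a unital C*-algebra satisfying the
Kadison–Schwarz inequality, and a fixed self-adjoint `a`, the following are equivalent: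
(a) `p (a²) = (p a)²`; (b) `p (a ∘ b) = p a ∘ p b` for all self-adjoint `b` (Jordan product);
(c) `p (a b a) = p a · p b · p a` for all self-adjoint `b`. -/
theorem kadisonSchwarz_multiplicativity_equiv
    (A : Type*) [CStarAlgebra A] [PartialOrder A] [StarOrderedRing A]
    (p : A →ₗ[ℂ] A)
    (hpos : ∀ x : A, 0 ≤ x → 0 ≤ p x)
    (hunital : p 1 = 1)
    (hKS : ∀ a : A, IsSelfAdjoint a → (p a) ^ 2 ≤ p (a ^ 2))
    (a : A) (ha : IsSelfAdjoint a) :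
    (p (a ^ 2) = (p a) ^ 2 ↔
      ∀ b : A, IsSelfAdjoint b →
        p ((2 : ℂ)⁻¹ • (a * b + b * a)) = (2 : ℂ)⁻¹ • (p a * p b + p b * p a)) ∧
    (p (a ^ 2) = (p a) ^ 2 ↔
      ∀ b : A, IsSelfAdjoint b → p (a * b * a) = p a * p b * p a) := by
  refine ⟨⟨fun h b hb => ?_, fun h => ?_⟩, fun h b hb => map_mul_mul_of_map_sq_eq hKS ha h hb,
    fun h => ?_⟩
  · rw [map_smul, map_mul_add_mul_of_map_sq_eq hKS ha h hb]
  · have haa := h a ha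
    rwa [← two_smul ℂ (a * a), ← two_smul ℂ (p a * p a), inv_smul_smul₀ two_ne_zero,
      inv_smul_smul₀ two_ne_zero, ← sq, ← sq] at haa
  · simpa [hunital, sq] using h 1 (.one A)
end

section
/- Let A be a unital C*-algebra and let p : A → A be a linear map that is positive (0 ≤ x implies 0 ≤ p(x)), unital (p(1) = 1), idempotent (p(p(x)) = p(x) for all x), and satisfies the Kadison–Schwarz inequality: (p(a))² ≤ p(a²) for every self-adjoint a ∈ A. Then for any fixed self-adjoint a ∈ A, the following are equivalent: (a) p(a²) = p((p(a))²); (b) p((ab+ba)/2) = p((p(a)p(b)+p(b)p(a))/2) for every self-adjoint b ∈ A; (c) p(aba) = p(p(a)p(b)p(a)) for every self-adjoint b ∈ A. -/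
open Filter Topology in
/-- If `n • c + e` is nonnegative for every natural number `n`, then so is `c`. -/
lemma nonneg_of_forall_nsmul_add_nonneg {A : Type*} [CStarAlgebra A] [PartialOrder A]
    [StarOrderedRing A] {c e : A} (h : ∀ n : ℕ, 0 ≤ n • c + e) : 0 ≤ c := by
  have hlim : Tendsto (fun n : ℕ => c + (1 / ((n : ℝ) + 1)) • e) atTop (𝓝 c) := by
    simpa using tendsto_const_nhds.add
      ((tendsto_one_div_add_atTop_nhds_zero_nat (𝕜 := ℝ)).smul_const e)
  refine ge_of_tendsto' hlim fun n => ?_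
  have hn : (0 : ℝ) < (n : ℝ) + 1 := by positivity
  have hsmul : c + (1 / ((n : ℝ) + 1)) • e = (1 / ((n : ℝ) + 1)) • ((n + 1) • c + e) := by
    rw [smul_add, ← Nat.cast_smul_eq_nsmul ℝ (n + 1) c, smul_smul]
    push_cast
    rw [one_div_mul_cancel hn.ne', one_smul]
  rw [hsmul]
  exact smul_nonneg (by positivity) (h (n + 1))

/-- If `n • c + e` and `n • (-c) + e` are nonnegative for every natural number `n`, then
`c = 0`. -/
lemma eq_zero_of_forall_nsmul_add_nonneg {A : Type*} [CStarAlgebra A] [PartialOrder A]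
    [StarOrderedRing A] {c e : A} (h : ∀ n : ℕ, 0 ≤ n • c + e)
    (h' : ∀ n : ℕ, 0 ≤ n • (-c) + e) : c = 0 :=
  le_antisymm (neg_nonneg.mp (nonneg_of_forall_nsmul_add_nonneg h'))
    (nonneg_of_forall_nsmul_add_nonneg h)

lemma IsSelfAdjoint.jordan {R : Type*} [NonUnitalRing R] [StarRing R] {a b : R}
    (ha : IsSelfAdjoint a) (hb : IsSelfAdjoint b) : IsSelfAdjoint (a * b + b * a) := by
  simp [isSelfAdjoint_iff, ha.star_eq, hb.star_eq, add_comm]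

/-- A Kadison–Schwarz projection: a positive unital idempotent linear map satisfying the
Kadison–Schwarz inequality on self-adjoint elements. -/
structure IsKadisonSchwarzProjection {A : Type*} [CStarAlgebra A] [PartialOrder A]
    (p : A →ₗ[ℂ] A) : Prop where
  map_nonneg : ∀ x : A, 0 ≤ x → 0 ≤ p x
  map_one : p 1 = 1
  idem : ∀ x : A, p (p x) = p x
  sq_le : ∀ a : A, IsSelfAdjoint a → (p a) ^ 2 ≤ p (a ^ 2)

namespace IsKadisonSchwarzProjection

variable {A : Type*} [CStarAlgebra A] [PartialOrder A] [StarOrderedRing A] {p : A →ₗ[ℂ] A}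

lemma map_mono (hp : IsKadisonSchwarzProjection p) {x y : A} (h : x ≤ y) : p x ≤ p y := by
  simpa using hp.map_nonneg (y - x) (sub_nonneg.mpr h)

lemma isSelfAdjoint_map (hp : IsKadisonSchwarzProjection p) {x : A} (hx : IsSelfAdjoint x) :
    IsSelfAdjoint (p x) := by
  rw [← CFC.posPart_sub_negPart x hx, map_sub]
  exact (IsSelfAdjoint.of_nonneg (hp.map_nonneg _ (CFC.posPart_nonneg x))).sub
    (IsSelfAdjoint.of_nonneg (hp.map_nonneg _ (CFC.negPart_nonneg x)))

lemma map_sq_map_le (hp : IsKadisonSchwarzProjection p) {x : A} (hx : IsSelfAdjoint x) :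
    p ((p x) ^ 2) ≤ p (x ^ 2) := by
  simpa [hp.idem] using hp.map_mono (hp.sq_le x hx)

/-- The positive semidefinite form `p (x ∘ y) - p (p x ∘ p y)` satisfies the Cauchy–Schwarz
principle: an isotropic vector lies in its kernel. -/
lemma map_jordan_of_map_sq (hp : IsKadisonSchwarzProjection p) {a : A} (ha : IsSelfAdjoint a)
    (h : p (a ^ 2) = p ((p a) ^ 2)) {b : A} (hb : IsSelfAdjoint b) :
    p (a * b + b * a) = p (p a * p b + p b * p a) := by
  rw [← sub_eq_zero]
  have key : ∀ c : A, IsSelfAdjoint c → p (c ^ 2) = p ((p c) ^ 2) → ∀ n : ℕ,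
      0 ≤ n • (p (c * b + b * c) - p (p c * p b + p b * p c)) +
        (p (b ^ 2) - p ((p b) ^ 2)) := by
    intro c hc hcc n
    have hle := sub_nonneg.mpr (hp.map_sq_map_le (x := n • c + b)
      ((IsSelfAdjoint.all (n : ℕ)).smul hc |>.add hb))
    have expand : ∀ u v : A,
        (n • u + v) ^ 2 = n • n • u ^ 2 + n • (u * v + v * u) + v ^ 2 := by
      intro u v
      simp only [sq, add_mul, mul_add, smul_mul_assoc, mul_smul_comm, smul_add]
      abel
    rw [map_add, map_nsmul, expand, expand] at hle
    simp only [map_add, map_nsmul, hcc] at hle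
    convert hle using 1
    simp only [smul_sub, map_add, smul_add]
    abel
  refine eq_zero_of_forall_nsmul_add_nonneg (key a ha h) fun n => ?_
  convert key (-a) ha.neg (by simpa using h) n using 3
  simp only [map_neg, neg_mul, mul_neg, map_add]
  abel

/-- On the range of `p`, the inner application of `p` in a Jordan product can be dropped. -/
lemma map_jordan_of_fixed (hp : IsKadisonSchwarzProjection p) {x : A} (hx : IsSelfAdjoint x)
    (hpx : p x = x) {b : A} (hb : IsSelfAdjoint b) :
    p (x * b + b * x) = p (x * p b + p b * x) := by
  simpa [hpx] using hp.map_jordan_of_map_sq hx (by rw [hpx]) hb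

lemma map_eq_zero_of_map_sq_eq_zero (hp : IsKadisonSchwarzProjection p) {n : A}
    (hn : IsSelfAdjoint n) (h : p (n ^ 2) = 0) : p n = 0 := by
  have h0 : (p n) ^ 2 = 0 :=
    le_antisymm (h ▸ hp.sq_le n hn) (hp.isSelfAdjoint_map hn).sq_nonneg
  rw [sq] at h0
  nth_rewrite 1 [← (hp.isSelfAdjoint_map hn).star_eq] at h0
  exact CStarRing.star_mul_self_eq_zero_iff _ |>.mp h0

lemma map_jordan_eq_zero (hp : IsKadisonSchwarzProjection p) {n : A} (hn : IsSelfAdjoint n)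
    (h : p (n ^ 2) = 0) {b : A} (hb : IsSelfAdjoint b) : p (n * b + b * n) = 0 := by
  have hpn := hp.map_eq_zero_of_map_sq_eq_zero hn h
  simpa [hpn] using hp.map_jordan_of_map_sq hn (by simp [hpn, h]) hb

lemma map_conj_eq_zero (hp : IsKadisonSchwarzProjection p) {n : A} (hn : IsSelfAdjoint n)
    (h : p (n ^ 2) = 0) {b : A} (hb : 0 ≤ b) : p (n * b * n) = 0 := by
  refine le_antisymm ?_ (hp.map_nonneg _ (hn.conjugate_nonneg hb))
  have hle : n * b * n ≤ (‖b‖ : ℂ) • n ^ 2 := by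
    have hnorm := hn.conjugate_le_conjugate
      (IsSelfAdjoint.le_algebraMap_norm_self (IsSelfAdjoint.of_nonneg hb))
    convert hnorm using 1
    rw [← Algebra.commutes, mul_assoc, ← sq, ← Algebra.smul_def]
    exact Complex.coe_smul _ _
  simpa [h] using hp.map_mono hle

/-- A nonnegative element of the kernel of `p` has square in the kernel. -/
lemma map_sq_eq_zero_of_nonneg (hp : IsKadisonSchwarzProjection p) {m : A} (hm : 0 ≤ m)
    (h : p m = 0) : p (m ^ 2) = 0 := by
  have hs : IsSelfAdjoint (CFC.sqrt m) := IsSelfAdjoint.of_nonneg (CFC.sqrt_nonneg m)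
  have hss : CFC.sqrt m * CFC.sqrt m = m := CFC.sqrt_mul_sqrt_self m hm
  have := hp.map_conj_eq_zero hs (by rw [sq, hss, h]) hm
  convert this using 2
  nth_rewrite 3 [← hss]
  rw [← mul_assoc, hss, mul_assoc, hss, sq]

/-- If `p (n²) = 0` and `x` is fixed by `p`, then `p ((x n + n x)²) = 0`. -/
lemma map_sq_jordan_eq_zero (hp : IsKadisonSchwarzProjection p) {n x : A}
    (hn : IsSelfAdjoint n) (h : p (n ^ 2) = 0) (hx : IsSelfAdjoint x) (hpx : p x = x) :
    p ((x * n + n * x) ^ 2) = 0 := by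
  have hm := hp.map_sq_eq_zero_of_nonneg hn.sq_nonneg h
  have hmsa : IsSelfAdjoint (n ^ 2) := hn.pow 2
  have hcross := hp.map_jordan_eq_zero hn h (hn.conjugate_self hx)
  have hconj := hp.map_conj_eq_zero hn h hx.sq_nonneg
  have hsq := hp.map_jordan_eq_zero hmsa hm (hx.pow 2)
  have hxm := hp.map_jordan_eq_zero hmsa hm hx
  have hfix := hp.map_jordan_of_fixed hx hpx (hmsa.jordan hx)
  rw [hxm] at hfix
  have expand : (x * n + n * x) ^ 2 = (n * (x * n * x) + x * n * x * n) + n * x ^ 2 * n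
      + ((x * (n ^ 2 * x + x * n ^ 2) + (n ^ 2 * x + x * n ^ 2) * x)
        - (n ^ 2 * x ^ 2 + x ^ 2 * n ^ 2) - x * n ^ 2 * x) := by
    noncomm_ring
  have hxmx : x * n ^ 2 * x + x * n ^ 2 * x =
      (x * (n ^ 2 * x + x * n ^ 2) + (n ^ 2 * x + x * n ^ 2) * x)
        - (n ^ 2 * x ^ 2 + x ^ 2 * n ^ 2) := by
    noncomm_ring
  have hzero : p (x * n ^ 2 * x) = 0 := by
    have := congrArg p hxmx
    rw [map_sub, hfix, hsq, map_add, ← two_smul ℂ] at this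
    simpa using this
  rw [expand, map_add, map_add, map_sub, map_sub, hcross, hconj, hfix, hsq, hzero]
  simp

/-- Squares of elements fixed by `p` are definite. -/
lemma map_jordan_sq_of_fixed (hp : IsKadisonSchwarzProjection p) {x : A}
    (hx : IsSelfAdjoint x) (hpx : p x = x) {b : A} (hb : IsSelfAdjoint b) :
    p (x ^ 2 * b + b * x ^ 2) = p (p (x ^ 2) * p b + p b * p (x ^ 2)) := by
  have hm : 0 ≤ p (x ^ 2) - x ^ 2 := by
    simpa [hpx] using hp.sq_le x hx
  have hmm := hp.map_sq_eq_zero_of_nonneg hm (by simp [hp.idem])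
  have hmb := hp.map_jordan_eq_zero (IsSelfAdjoint.of_nonneg hm) hmm hb
  rw [← hp.map_jordan_of_fixed (hp.isSelfAdjoint_map (hx.pow 2)) (hp.idem _) hb, eq_comm,
    ← sub_eq_zero, ← map_sub, ← hmb]
  congr 1
  noncomm_ring

/-- The square of a definite element is definite. -/
lemma map_jordan_sq_of_map_sq (hp : IsKadisonSchwarzProjection p) {a : A}
    (ha : IsSelfAdjoint a) (h : p (a ^ 2) = p ((p a) ^ 2)) {b : A} (hb : IsSelfAdjoint b) :
    p (a ^ 2 * b + b * a ^ 2) = p (p (a ^ 2) * p b + p b * p (a ^ 2)) := by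
  have hx := hp.isSelfAdjoint_map ha
  have hn := ha.sub hx
  have hxa := hp.map_jordan_of_fixed hx (hp.idem a) ha
  have hnn : p ((a - p a) ^ 2) = 0 := by
    have expand : (a - p a) ^ 2 = a ^ 2 - (p a * a + a * p a) + (p a) ^ 2 := by
      noncomm_ring
    rw [expand, map_add, map_sub, h, hxa, map_add, ← sq]
    abel
  have hm := hp.map_jordan_eq_zero (hn.pow 2) (hp.map_sq_eq_zero_of_nonneg hn.sq_nonneg hnn) hb
  have hj := hp.map_jordan_eq_zero (hx.jordan hn)
    (hp.map_sq_jordan_eq_zero hn hnn hx (hp.idem a)) hb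
  have hs := hp.map_jordan_sq_of_fixed hx (hp.idem a) hb
  have expand : a ^ 2 * b + b * a ^ 2 = ((p a) ^ 2 * b + b * (p a) ^ 2)
      + ((p a * (a - p a) + (a - p a) * p a) * b + b * (p a * (a - p a) + (a - p a) * p a))
      + ((a - p a) ^ 2 * b + b * (a - p a) ^ 2) := by
    noncomm_ring
  rw [expand, map_add, map_add, hm, hj, hs, h, add_zero, add_zero]

/-- Definite elements are multiplicative for the quadratic product `b ↦ a b a`. -/
lemma map_conj_of_map_sq (hp : IsKadisonSchwarzProjection p) {a : A} (ha : IsSelfAdjoint a)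
    (h : p (a ^ 2) = p ((p a) ^ 2)) {b : A} (hb : IsSelfAdjoint b) :
    p (a * b * a) = p (p a * p b * p a) := by
  have hx := hp.isSelfAdjoint_map ha
  have hy := hp.isSelfAdjoint_map hb
  have expand : ∀ u v : A, (2 : ℂ) • (u * v * u) =
      (u * (u * v + v * u) + (u * v + v * u) * u) - (u ^ 2 * v + v * u ^ 2) := by
    intro u v
    rw [two_smul]
    noncomm_ring
  have hdouble : (2 : ℂ) • p (a * b * a) = (2 : ℂ) • p (p a * p b * p a) := by
    rw [← map_smul, ← map_smul, expand, expand, map_sub, map_sub,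
      hp.map_jordan_of_map_sq ha h (ha.jordan hb), hp.map_jordan_of_map_sq ha h hb,
      hp.map_jordan_sq_of_map_sq ha h hb,
      hp.map_jordan_of_fixed hx (hp.idem a) (hx.jordan hy),
      hp.map_jordan_sq_of_fixed hx (hp.idem a) hy, hp.idem b, h]
  exact smul_right_injective A (two_ne_zero (α := ℂ)) hdouble

end IsKadisonSchwarzProjection

/-- For a positive unital idempotent linear map `p` on a unital C*-algebra
satisfying the Kadison–Schwarz inequality, and a fixed self-adjoint `a`, the following are
equivalent: (a) `p (a²) = p ((p a)²)`; (b) `p (a ∘ b) = p (p a ∘ p b)` for all self-adjoint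
`b` (Jordan product); (c) `p (a b a) = p (p a · p b · p a)` for all self-adjoint `b`. -/
theorem kadisonSchwarz_idempotent_multiplicativity_equiv
    (A : Type*) [CStarAlgebra A] [PartialOrder A] [StarOrderedRing A]
    (p : A →ₗ[ℂ] A)
    (hpos : ∀ x : A, 0 ≤ x → 0 ≤ p x)
    (hunital : p 1 = 1)
    (hidem : ∀ x : A, p (p x) = p x)
    (hKS : ∀ a : A, IsSelfAdjoint a → (p a) ^ 2 ≤ p (a ^ 2))
    (a : A) (ha : IsSelfAdjoint a) :
    (p (a ^ 2) = p ((p a) ^ 2) ↔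
      ∀ b : A, IsSelfAdjoint b →
        p ((2 : ℂ)⁻¹ • (a * b + b * a)) = p ((2 : ℂ)⁻¹ • (p a * p b + p b * p a))) ∧
    (p (a ^ 2) = p ((p a) ^ 2) ↔
      ∀ b : A, IsSelfAdjoint b → p (a * b * a) = p (p a * p b * p a)) := by
  have hp : IsKadisonSchwarzProjection p := ⟨hpos, hunital, hidem, hKS⟩
  refine ⟨⟨fun h b hb => ?_, fun h => ?_⟩, fun h b hb => hp.map_conj_of_map_sq ha h hb,
    fun h => ?_⟩
  · rw [map_smul, map_smul, hp.map_jordan_of_map_sq ha h hb]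
  · have hhalf : ∀ u : A, (2 : ℂ)⁻¹ • (u * u + u * u) = u ^ 2 := by
      intro u
      rw [← two_smul ℂ, smul_smul, inv_mul_cancel₀ two_ne_zero, one_smul, sq]
    simpa only [hhalf] using h a ha
  · simpa [hunital, sq] using h 1 (IsSelfAdjoint.one A)
end

section
/- Let A be a unital C*-algebra and let E(A) = {a ∈ A : 0 ≤ a ≤ 1}. Let τ : E(A) → E(A) satisfy τ(1) = 1, τ(a+b) = τ(a)+τ(b) whenever a, b and a+b all lie in E(A), and the conditional expectation property: τ(τ(a)·b·τ(a)) = τ(a)·τ(b)·τ(a) for all a, b ∈ E(A). Then τ is idempotent, i.e., τ(τ(a)) = τ(a) for every a ∈ E(A) (so τ is a state operator), and moreover τ(τ(a)²) = τ(a)² for every a ∈ E(A). -/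
/-- The square of an effect of a unital C*-algebra is an effect. -/
theorem sq_mem_Icc_zero_one {A : Type*} [CStarAlgebra A] [PartialOrder A] [StarOrderedRing A]
    {x : A} (hx : x ∈ Set.Icc (0 : A) 1) : x ^ 2 ∈ Set.Icc (0 : A) 1 := by
  have hsq : 0 ≤ x ^ 2 := (IsSelfAdjoint.of_nonneg hx.1).sq_nonneg
  refine ⟨hsq, (CStarAlgebra.norm_le_one_iff_of_nonneg _ hsq).1 ?_⟩
  have hnorm : ‖x‖ ≤ 1 := (CStarAlgebra.norm_le_one_iff_of_nonneg x hx.1).2 hx.2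
  exact (norm_pow_le' x two_pos).trans (pow_le_one₀ (norm_nonneg x) hnorm)

/-- The midpoint of two effects is an effect. -/
theorem half_smul_add_half_smul_mem_Icc_zero_one {A : Type*} [CStarAlgebra A] [PartialOrder A]
    [StarOrderedRing A] {x y : A} (hx : x ∈ Set.Icc (0 : A) 1) (hy : y ∈ Set.Icc (0 : A) 1) :
    (1 / 2 : ℝ) • x + (1 / 2 : ℝ) • y ∈ Set.Icc (0 : A) 1 :=
  convex_Icc (𝕜 := ℝ) 0 1 hx hy (by norm_num) (by norm_num) (by norm_num)

/-- An additive map on effects preserves midpoints. -/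
theorem map_half_smul_add_half_smul_of_additive_on_effects {A : Type*} [CStarAlgebra A]
    [PartialOrder A] [StarOrderedRing A] {τ : A → A}
    (hadd : ∀ a ∈ Set.Icc (0 : A) 1, ∀ b ∈ Set.Icc (0 : A) 1,
      a + b ∈ Set.Icc (0 : A) 1 → τ (a + b) = τ a + τ b)
    {x y : A} (hx : x ∈ Set.Icc (0 : A) 1) (hy : y ∈ Set.Icc (0 : A) 1) :
    τ ((1 / 2 : ℝ) • x + (1 / 2 : ℝ) • y) = (1 / 2 : ℝ) • τ x + (1 / 2 : ℝ) • τ y := by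
  have hmem {z : A} (hz : z ∈ Set.Icc (0 : A) 1) : (1 / 2 : ℝ) • z ∈ Set.Icc (0 : A) 1 := by
    simpa using half_smul_add_half_smul_mem_Icc_zero_one hz
      (Set.left_mem_Icc.2 (zero_le_one (α := A)))
  have hhalf {z : A} (hz : z ∈ Set.Icc (0 : A) 1) :
      τ ((1 / 2 : ℝ) • z) = (1 / 2 : ℝ) • τ z := by
    have hsum : (1 / 2 : ℝ) • z + (1 / 2 : ℝ) • z = z := by module
    have hτ := hadd _ (hmem hz) _ (hmem hz) (hsum.symm ▸ hz)
    rw [hsum] at hτ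
    rw [hτ]
    module
  rw [hadd _ (hmem hx) _ (hmem hy) (half_smul_add_half_smul_mem_Icc_zero_one hx hy),
    hhalf hx, hhalf hy]

/-- A unital additive map `τ` on the effect algebra `E(A) = {a : 0 ≤ a ≤ 1}` of a
unital C*-algebra satisfying the conditional expectation property
`τ (τ a · b · τ a) = τ a · τ b · τ a` is idempotent (hence a state operator), and moreover
`τ ((τ a)²) = (τ a)²` for every effect `a`. -/
theorem conditionalExpectation_is_stateOperator
    (A : Type*) [CStarAlgebra A] [PartialOrder A] [StarOrderedRing A]
    (τ : A → A)
    (hmaps : ∀ a ∈ Set.Icc (0 : A) 1, τ a ∈ Set.Icc (0 : A) 1)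
    (hunital : τ 1 = 1)
    (hadd : ∀ a ∈ Set.Icc (0 : A) 1, ∀ b ∈ Set.Icc (0 : A) 1,
      a + b ∈ Set.Icc (0 : A) 1 → τ (a + b) = τ a + τ b)
    (hce : ∀ a ∈ Set.Icc (0 : A) 1, ∀ b ∈ Set.Icc (0 : A) 1,
      τ (τ a * b * τ a) = τ a * τ b * τ a) :
    ∀ a ∈ Set.Icc (0 : A) 1, τ (τ a) = τ a ∧ τ ((τ a) ^ 2) = (τ a) ^ 2 := by
  have hone : (1 : A) ∈ Set.Icc (0 : A) 1 := Set.right_mem_Icc.2 zero_le_one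
  have hsq : ∀ a ∈ Set.Icc (0 : A) 1, τ ((τ a) ^ 2) = (τ a) ^ 2 := fun a ha => by
    simpa [hunital, sq] using hce a ha 1 hone
  intro a ha
  refine ⟨?_, hsq a ha⟩
  have hx := hmaps a ha
  have hx2 := sq_mem_Icc_zero_one hx
  -- Apply `hsq` to the midpoint of `1` and `a`, and expand the square.
  have hmid := hsq _ (half_smul_add_half_smul_mem_Icc_zero_one hone ha)
  rw [map_half_smul_add_half_smul_of_additive_on_effects hadd hone ha, hunital] at hmid
  have hexpand : ((1 / 2 : ℝ) • (1 : A) + (1 / 2 : ℝ) • τ a) ^ 2 =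
      (1 / 2 : ℝ) • τ a + (1 / 2 : ℝ) • ((1 / 2 : ℝ) • (1 : A) + (1 / 2 : ℝ) • (τ a) ^ 2) := by
    simp only [sq, add_mul, mul_add, smul_mul_assoc, mul_smul_comm, one_mul, mul_one]
    module
  rw [hexpand, map_half_smul_add_half_smul_of_additive_on_effects hadd hx
      (half_smul_add_half_smul_mem_Icc_zero_one hone hx2),
    map_half_smul_add_half_smul_of_additive_on_effects hadd hone hx2, hunital, hsq a ha] at hmid
  exact smul_right_injective A (by norm_num : (1 / 2 : ℝ) ≠ 0) (add_right_cancel hmid)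
end

section
/- Let A be a unital C*-algebra, E(A) = {a ∈ A : 0 ≤ a ≤ 1}, and let τ : E(A) → E(A) be a state operator (unital, additive and idempotent). Then τ satisfies the conditional expectation property τ(τ(a)·b·τ(a)) = τ(a)·τ(b)·τ(a) for all a, b ∈ E(A) if and only if the range of τ is closed under squaring, i.e., for every a ∈ E(A) there exists b ∈ E(A) with (τ(a))² = τ(b). -/
section EffectAlgebra

variable {A : Type*} [CStarAlgebra A] [PartialOrder A] [StarOrderedRing A]

/-- The order of a C*-algebra is Archimedean. -/
theorem CStarAlgebra.nonpos_of_forall_nsmul_le {c d : A}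
    (h : ∀ n : ℕ, 0 < n → n • d ≤ c) : d ≤ 0 := by
  have hlim : Filter.Tendsto (fun n : ℕ => ((n : ℝ)⁻¹) • c) Filter.atTop (nhds 0) := by
    simpa using (tendsto_inv_atTop_nhds_zero_nat (𝕜 := ℝ)).smul_const c
  refine ge_of_tendsto hlim ?_
  filter_upwards [Filter.eventually_gt_atTop 0] with n hn
  have hn' : (0 : ℝ) < n := by exact_mod_cast hn
  have := smul_le_smul_of_nonneg_left (h n hn) (inv_nonneg.2 hn'.le)
  rwa [← Nat.cast_smul_eq_nsmul ℝ, smul_smul, inv_mul_cancel₀ hn'.ne', one_smul] at this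

theorem IsSelfAdjoint.exists_nat_neg_le_and_le {a : A} (ha : IsSelfAdjoint a) :
    ∃ n : ℕ, -(n : A) ≤ a ∧ a ≤ n := by
  obtain ⟨n, hn⟩ := exists_nat_ge ‖a‖
  have hle : algebraMap ℝ A ‖a‖ ≤ n := by
    simpa using algebraMap_mono A hn
  exact ⟨n, (neg_le_neg hle).trans ha.neg_algebraMap_norm_le_self,
    ha.le_algebraMap_norm_self.trans hle⟩

theorem inv_nat_smul_mem_Icc {a : A} (ha : 0 ≤ a) {n : ℕ} (hn : 0 < n) (han : a ≤ n) :
    (n : ℝ)⁻¹ • a ∈ Set.Icc (0 : A) 1 := by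
  have hn' : (0 : ℝ) < n := by exact_mod_cast hn
  refine ⟨smul_nonneg (inv_nonneg.2 hn'.le) ha, ?_⟩
  have := smul_le_smul_of_nonneg_left han (inv_nonneg.2 hn'.le)
  rwa [← nsmul_one (A := A) n, ← Nat.cast_smul_eq_nsmul ℝ, smul_smul, inv_mul_cancel₀ hn'.ne',
    one_smul] at this

section Extension

variable {τ : A → A}

theorem map_nsmul_of_add_on_Icc
    (hadd : ∀ a ∈ Set.Icc (0 : A) 1, ∀ b ∈ Set.Icc (0 : A) 1,
      a + b ∈ Set.Icc (0 : A) 1 → τ (a + b) = τ a + τ b)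
    {a : A} (ha : 0 ≤ a) (n : ℕ) (hn : n • a ≤ 1) : τ (n • a) = n • τ a := by
  induction n with
  | zero =>
    have h0 : (0 : A) ∈ Set.Icc (0 : A) 1 := ⟨le_rfl, zero_le_one⟩
    have := hadd 0 h0 0 h0 (by simp [h0])
    simpa using this
  | succ k ih =>
    rw [succ_nsmul] at hn ⊢
    have hk : 0 ≤ k • a := nsmul_nonneg ha k
    have hk1 : k • a ≤ 1 := (le_add_of_nonneg_right ha).trans hn
    have ha1 : a ≤ 1 := (le_add_of_nonneg_left hk).trans hn
    rw [hadd _ ⟨hk, hk1⟩ _ ⟨ha, ha1⟩ ⟨add_nonneg hk ha, hn⟩, ih hk1, succ_nsmul]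

theorem nsmul_map_inv_smul_eq
    (hadd : ∀ a ∈ Set.Icc (0 : A) 1, ∀ b ∈ Set.Icc (0 : A) 1,
      a + b ∈ Set.Icc (0 : A) 1 → τ (a + b) = τ a + τ b)
    {a : A} (ha : 0 ≤ a) {m n : ℕ} (hm : 0 < m) (hn : 0 < n) (ham : a ≤ m) (han : a ≤ n) :
    m • τ ((m : ℝ)⁻¹ • a) = n • τ ((n : ℝ)⁻¹ • a) := by
  have key : ∀ {p q : ℕ}, 0 < p → 0 < q → a ≤ p →
      p • τ ((p : ℝ)⁻¹ • a) = (p * q) • τ (((p * q : ℕ) : ℝ)⁻¹ • a) := by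
    intro p q hp hq hap
    have hq' : (q : ℝ) ≠ 0 := by exact_mod_cast hq.ne'
    have hsplit : (p : ℝ)⁻¹ • a = q • (((p * q : ℕ) : ℝ)⁻¹ • a) := by
      rw [← Nat.cast_smul_eq_nsmul ℝ, smul_smul]
      congr 1
      push_cast
      field_simp
    have hmem := inv_nat_smul_mem_Icc ha hp hap
    rw [hsplit] at hmem
    rw [hsplit, map_nsmul_of_add_on_Icc hadd (smul_nonneg (by positivity) ha) q hmem.2,
      mul_nsmul']
  rw [key hm hn ham, key hn hm han, mul_comm]

/-- A unital map which is additive on the unit interval of a C*-algebra is additive on the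
positive cone after rescaling. -/
theorem exists_additive_on_nonneg (hunital : τ 1 = 1)
    (hadd : ∀ a ∈ Set.Icc (0 : A) 1, ∀ b ∈ Set.Icc (0 : A) 1,
      a + b ∈ Set.Icc (0 : A) 1 → τ (a + b) = τ a + τ b) :
    ∃ σ : A → A, (∀ a ∈ Set.Icc (0 : A) 1, σ a = τ a) ∧ (∀ n : ℕ, σ n = n) ∧
      ∀ a b, 0 ≤ a → 0 ≤ b → σ (a + b) = σ a + σ b := by
  have hbound : ∀ a : A, ∃ n : ℕ, 0 < n ∧ (0 ≤ a → a ≤ n) := by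
    intro a
    by_cases ha : 0 ≤ a
    · obtain ⟨n, -, hn⟩ := (IsSelfAdjoint.of_nonneg ha).exists_nat_neg_le_and_le
      exact ⟨n + 1, n.succ_pos, fun _ => hn.trans (by simp)⟩
    · exact ⟨1, one_pos, fun h => absurd h ha⟩
  choose N hN hle using hbound
  let σ : A → A := fun a => N a • τ ((N a : ℝ)⁻¹ • a)
  have hσ : ∀ {a : A} {n : ℕ}, 0 ≤ a → 0 < n → a ≤ n → σ a = n • τ ((n : ℝ)⁻¹ • a) :=
    fun ha hn han => nsmul_map_inv_smul_eq hadd ha (hN _) hn (hle _ ha) han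
  have hσE : ∀ a ∈ Set.Icc (0 : A) 1, σ a = τ a := fun a ha => by
    rw [hσ ha.1 one_pos (by simpa using ha.2)]
    simp
  have hσadd : ∀ a b, 0 ≤ a → 0 ≤ b → σ (a + b) = σ a + σ b := by
    intro a b ha hb
    have hn := hN (a + b)
    have hab := hle _ (add_nonneg ha hb)
    have han := (le_add_of_nonneg_right hb).trans hab
    have hbn := (le_add_of_nonneg_left ha).trans hab
    have hmem := inv_nat_smul_mem_Icc (add_nonneg ha hb) hn hab
    rw [hσ (add_nonneg ha hb) hn hab, hσ ha hn han, hσ hb hn hbn, ← nsmul_add]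
    rw [smul_add] at hmem ⊢
    rw [hadd _ (inv_nat_smul_mem_Icc ha hn han) _ (inv_nat_smul_mem_Icc hb hn hbn) hmem]
  refine ⟨σ, hσE, fun n => ?_, hσadd⟩
  induction n with
  | zero =>
    have := hσadd 0 0 le_rfl le_rfl
    simpa using this
  | succ k ih =>
    rw [Nat.cast_succ, hσadd _ _ (Nat.cast_nonneg' k) zero_le_one, ih,
      hσE 1 ⟨zero_le_one, le_rfl⟩, hunital]

/-- A unital map which is additive on the unit interval of a C*-algebra agrees there with an
additive map on the whole algebra. -/
theorem exists_addMonoidHom_eqOn_Icc (hunital : τ 1 = 1)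
    (hadd : ∀ a ∈ Set.Icc (0 : A) 1, ∀ b ∈ Set.Icc (0 : A) 1,
      a + b ∈ Set.Icc (0 : A) 1 → τ (a + b) = τ a + τ b) :
    ∃ T : A →+ A, ∀ a ∈ Set.Icc (0 : A) 1, T a = τ a := by
  obtain ⟨σ, hσE, hσn, hσadd⟩ := exists_additive_on_nonneg hunital hadd
  choose N hN using fun x : A =>
    (show ∃ n : ℕ, 0 ≤ (realPart x : A) + n by
      obtain ⟨n, hn, -⟩ := IsSelfAdjoint.exists_nat_neg_le_and_le (realPart x).2
      exact ⟨n, neg_le_iff_add_nonneg.1 hn⟩)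
  have hcast : ∀ n : ℕ, (0 : A) ≤ n := fun n => Nat.cast_nonneg' n
  refine ⟨AddMonoidHom.mk' (fun x => σ ((realPart x : A) + N x) - N x) fun x y => ?_,
    fun a ha => ?_⟩
  · have h₁ := hσadd _ _ (hN (x + y)) (add_nonneg (hcast (N x)) (hcast (N y)))
    have h₂ := hσadd _ _ (add_nonneg (hN x) (hN y)) (hcast (N (x + y)))
    rw [hσadd _ _ (hN x) (hN y), hσn] at h₂
    rw [hσadd _ _ (hcast _) (hcast _), hσn, hσn] at h₁
    have h₃ : (realPart (x + y) : A) + N (x + y) + ((N x : A) + N y) =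
        (realPart x : A) + N x + ((realPart y : A) + N y) + N (x + y) := by
      rw [map_add, AddSubgroup.coe_add]
      abel
    rw [h₃, h₂] at h₁
    change σ _ - _ = σ _ - _ + (σ _ - _)
    rw [eq_sub_of_add_eq h₁.symm]
    abel
  · change σ _ - _ = _
    rw [(IsSelfAdjoint.of_nonneg ha.1).coe_realPart, hσadd _ _ ha.1 (hcast _), hσn, hσE a ha,
      add_sub_cancel_right]

end Extension

section Kadison

variable {T : A →+ A}

theorem AddMonoidHom.map_nonneg_of_Icc (hT : ∀ a ∈ Set.Icc (0 : A) 1, 0 ≤ T a) {a : A}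
    (ha : 0 ≤ a) : 0 ≤ T a := by
  obtain ⟨n, -, hn⟩ := (IsSelfAdjoint.of_nonneg ha).exists_nat_neg_le_and_le
  have hn' : a ≤ (n + 1 : ℕ) := hn.trans (by simp)
  have key : a = (n + 1) • (((n + 1 : ℕ) : ℝ)⁻¹ • a) := by
    rw [← Nat.cast_smul_eq_nsmul ℝ, smul_smul, mul_inv_cancel₀ (by positivity), one_smul]
  rw [key, map_nsmul]
  exact nsmul_nonneg (hT _ (inv_nat_smul_mem_Icc ha n.succ_pos hn')) _

/-- Kadison's inequality on the unit interval. -/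
theorem AddMonoidHom.sq_map_le_map_sq_of_mem_Icc (hT : ∀ a, 0 ≤ a → 0 ≤ T a) (hT1 : T 1 = 1)
    {a : A} (ha : a ∈ Set.Icc (0 : A) 1) : T a ^ 2 ≤ T (a ^ 2) := by
  rw [← sub_nonpos]
  refine CStarAlgebra.nonpos_of_forall_nsmul_le (c := T a - T (a ^ 2)) fun n hn => ?_
  obtain ⟨n, rfl⟩ : ∃ m, n = m + 1 := ⟨n - 1, by omega⟩
  set m := T a
  set p : ℕ → A := fun k => Polynomial.aeval a (bernsteinPolynomial ℤ (n + 1) k) with hp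
  have hp0 : ∀ k, 0 ≤ T (p k) := fun k => hT _ <| by
    have hc : Commute (a ^ k) ((1 - a) ^ (n + 1 - k)) :=
      ((Commute.one_right a).sub_right (Commute.refl a)).pow_pow _ _
    have h := hc.mul_nonneg (CStarAlgebra.pow_nonneg ha.1 k)
      (CStarAlgebra.pow_nonneg (sub_nonneg.2 ha.2) _)
    simpa [hp, bernsteinPolynomial, mul_assoc, ← nsmul_eq_mul] using nsmul_nonneg h _
  have h0 : ∑ k ∈ Finset.range (n + 1 + 1), T (p k) = 1 := by
    rw [← map_sum, ← map_sum, bernsteinPolynomial.sum, map_one, hT1]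
  have h1 : ∑ k ∈ Finset.range (n + 1 + 1), k • T (p k) = (n + 1) • m := by
    simp_rw [← map_nsmul, hp, ← map_nsmul]
    rw [← map_sum, ← map_sum, bernsteinPolynomial.sum_smul, map_nsmul, map_nsmul,
      Polynomial.aeval_X]
  have h2 : ∑ k ∈ Finset.range (n + 1 + 1), (k * (k - 1)) • T (p k) =
      ((n + 1) * n) • T (a ^ 2) := by
    simp_rw [← map_nsmul, hp, ← map_nsmul]
    rw [← map_sum, ← map_sum, bernsteinPolynomial.sum_mul_smul, map_nsmul, map_nsmul,
      map_pow, Polynomial.aeval_X, Nat.add_sub_cancel, map_nsmul]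
  have hmsa : IsSelfAdjoint m := IsSelfAdjoint.of_nonneg (hT _ ha.1)
  have hpos : 0 ≤ ∑ k ∈ Finset.range (n + 1 + 1),
      ((k : A) - (n + 1 : ℕ) * m) * T (p k) * ((k : A) - (n + 1 : ℕ) * m) :=
    Finset.sum_nonneg fun k _ => by
      refine IsSelfAdjoint.conjugate_nonneg (hp0 k) ?_
      rw [← nsmul_eq_mul]
      exact (IsSelfAdjoint.natCast k).sub ((IsSelfAdjoint.all (n + 1)).smul hmsa)
  have hexp : ∑ k ∈ Finset.range (n + 1 + 1),
      ((k : A) - (n + 1 : ℕ) * m) * T (p k) * ((k : A) - (n + 1 : ℕ) * m) =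
      (n + 1) • (m - T (a ^ 2) - (n + 1) • (m ^ 2 - T (a ^ 2))) := by
    have hterm : ∀ k : ℕ, ((k : A) - (n + 1 : ℕ) * m) * T (p k) * ((k : A) - (n + 1 : ℕ) * m) =
        (k * (k - 1)) • T (p k) + k • T (p k) - (k • T (p k)) * ((n + 1) • m)
          - ((n + 1) • m) * (k • T (p k)) + ((n + 1) • m) * T (p k) * ((n + 1) • m) := by
      intro k
      have hk : (k * (k - 1)) • T (p k) + k • T (p k) = k • T (p k) * k := by
        rw [← add_nsmul, ← nsmul_eq_mul', ← mul_nsmul]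
        congr 1
        cases k <;> simp
        ring
      rw [hk]
      simp only [nsmul_eq_mul, sub_mul, mul_sub]
      have hcm : Commute (k : A) (((n + 1 : ℕ) : A) * m * T (p k)) := Nat.cast_commute _ _
      rw [← hcm.eq]
      rw [show (k : A) * (((n + 1 : ℕ) : A) * m * T (p k)) =
        ((n + 1 : ℕ) : A) * m * ((k : A) * T (p k)) by
          rw [← mul_assoc, (Nat.cast_commute k (((n + 1 : ℕ) : A) * m)).eq, mul_assoc]]
      abel
    simp_rw [hterm]
    rw [Finset.sum_add_distrib, Finset.sum_sub_distrib, Finset.sum_sub_distrib,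
      Finset.sum_add_distrib, ← Finset.sum_mul, ← Finset.mul_sum, ← Finset.sum_mul,
      ← Finset.mul_sum, h0, h1, h2]
    simp only [nsmul_eq_mul, mul_one]
    have hcm : Commute m ((n + 1 : ℕ) : A) := Nat.commute_cast _ _
    have : ((n + 1 : ℕ) : A) * m * (((n + 1 : ℕ) : A) * m) =
        ((n + 1 : ℕ) : A) * (((n + 1 : ℕ) : A) * m ^ 2) := by
      rw [mul_assoc, ← mul_assoc m, hcm.eq, sq, mul_assoc]
    rw [this]
    push_cast
    noncomm_ring
  rw [hexp] at hpos
  have hinv : (0 : ℝ) ≤ ((n + 1 : ℕ) : ℝ)⁻¹ := by positivity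
  have := smul_nonneg hinv hpos
  rw [← Nat.cast_smul_eq_nsmul ℝ, smul_smul, inv_mul_cancel₀ (by positivity), one_smul] at this
  exact sub_nonneg.1 this

/-- Kadison's inequality for positive unital additive maps on a C*-algebra. -/
theorem AddMonoidHom.sq_map_le_map_sq (hT : ∀ a, 0 ≤ a → 0 ≤ T a) (hT1 : T 1 = 1)
    {a : A} (ha : IsSelfAdjoint a) : T a ^ 2 ≤ T (a ^ 2) := by
  obtain ⟨n, hn, hn'⟩ := ha.exists_nat_neg_le_and_le
  have hpos := neg_le_iff_add_nonneg.1 hn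
  have hle : a + n ≤ (2 * n + 1 : ℕ) := by
    push_cast
    rw [two_mul]
    exact (add_le_add_left hn' _).trans (le_add_of_nonneg_right zero_le_one)
  have hmem := inv_nat_smul_mem_Icc hpos (Nat.succ_pos _) hle
  set e := ((2 * n + 1 : ℕ) : ℝ)⁻¹ • (a + n) with he
  have hae : a = (2 * n + 1) • e - n • 1 := by
    rw [he, ← Nat.cast_smul_eq_nsmul ℝ, smul_smul, mul_inv_cancel₀ (by positivity), one_smul,
      nsmul_one, add_sub_cancel_right]
  have hsq : ∀ x : A, ((2 * n + 1) • x - n • 1) ^ 2 =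
      ((2 * n + 1) * (2 * n + 1)) • x ^ 2 - (2 * (2 * n + 1) * n) • x + (n * n) • 1 := by
    intro x
    simp only [sq, sub_mul, mul_sub, smul_mul_assoc, mul_smul_comm, mul_one, one_mul]
    module
  have hkad := AddMonoidHom.sq_map_le_map_sq_of_mem_Icc hT hT1 hmem
  rw [hae, hsq, map_sub, map_nsmul, map_nsmul, hT1, hsq, map_add, map_sub, map_nsmul, map_nsmul,
    map_nsmul, hT1]
  gcongr

/-- A fixed point of a positive unital additive map whose square is also fixed lies in the
Jordan multiplicative domain. -/
theorem AddMonoidHom.map_jordan_mul (hT : ∀ a, 0 ≤ a → 0 ≤ T a) (hT1 : T 1 = 1)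
    {x b : A} (hx : IsSelfAdjoint x) (hTx : T x = x) (hTx2 : T (x ^ 2) = x ^ 2)
    (hb : IsSelfAdjoint b) : T (x * b + b * x) = x * T b + T b * x := by
  have key : ∀ b : A, IsSelfAdjoint b → x * T b + T b * x ≤ T (x * b + b * x) := by
    intro b hb
    rw [← sub_nonpos]
    refine CStarAlgebra.nonpos_of_forall_nsmul_le (c := T (b ^ 2) - T b ^ 2) fun n _ => ?_
    have hkad := AddMonoidHom.sq_map_le_map_sq hT hT1 (((IsSelfAdjoint.all n).smul hx).add hb)
    have hsq : ∀ y : A, (n • x + y) ^ 2 = (n * n) • x ^ 2 + n • (x * y + y * x) + y ^ 2 := by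
      intro y
      simp only [sq, add_mul, mul_add, smul_mul_assoc, mul_smul_comm, smul_add, mul_nsmul']
      abel
    rw [map_add, map_nsmul, hTx, hsq, hsq, map_add, map_add, map_nsmul, map_nsmul, hTx2,
      add_assoc, add_assoc, add_le_add_iff_left] at hkad
    rw [nsmul_sub, sub_le_sub_iff]
    simpa [add_comm] using hkad
  refine le_antisymm ?_ (key b hb)
  have := key (-b) hb.neg
  rw [map_neg, mul_neg, neg_mul, ← neg_add, mul_neg, neg_mul, ← neg_add, map_neg] at this
  exact neg_le_neg_iff.1 this

theorem AddMonoidHom.map_conjugate (hT : ∀ a, 0 ≤ a → 0 ≤ T a) (hT1 : T 1 = 1)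
    {x b : A} (hx : IsSelfAdjoint x) (hTx : T x = x) (hTx2 : T (x ^ 2) = x ^ 2)
    (hTx4 : T ((x ^ 2) ^ 2) = (x ^ 2) ^ 2) (hb : IsSelfAdjoint b) :
    T (x * b * x) = x * T b * x := by
  have hsum : IsSelfAdjoint (x * b + b * x) := by
    simp [IsSelfAdjoint, hx.star_eq, hb.star_eq, add_comm]
  have hjordan : ∀ y : A, 2 • (x * y * x) =
      x * (x * y + y * x) + (x * y + y * x) * x - (x ^ 2 * y + y * x ^ 2) := fun y => by
    noncomm_ring
  have h : 2 • T (x * b * x) = 2 • (x * T b * x) := by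
    rw [← map_nsmul, hjordan, map_sub, map_jordan_mul hT hT1 hx hTx hTx2 hsum,
      map_jordan_mul hT hT1 (hx.pow 2) hTx2 hTx4 hb, map_jordan_mul hT hT1 hx hTx hTx2 hb,
      hjordan]
  have h2 := congrArg ((2 : ℝ)⁻¹ • ·) h
  simpa [← Nat.cast_smul_eq_nsmul ℝ, smul_smul] using h2

end Kadison

end EffectAlgebra

/-- A state operator `τ` on the effect algebra `E(A)` of a unital C*-algebra
satisfies the conditional expectation property iff its range is closed under squaring. -/
theorem conditionalExpectation_iff_range_closed_under_square
    (A : Type*) [CStarAlgebra A] [PartialOrder A] [StarOrderedRing A]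
    (τ : A → A)
    (hmaps : ∀ a ∈ Set.Icc (0 : A) 1, τ a ∈ Set.Icc (0 : A) 1)
    (hunital : τ 1 = 1)
    (hadd : ∀ a ∈ Set.Icc (0 : A) 1, ∀ b ∈ Set.Icc (0 : A) 1,
      a + b ∈ Set.Icc (0 : A) 1 → τ (a + b) = τ a + τ b)
    (hidem : ∀ a ∈ Set.Icc (0 : A) 1, τ (τ a) = τ a) :
    (∀ a ∈ Set.Icc (0 : A) 1, ∀ b ∈ Set.Icc (0 : A) 1,
        τ (τ a * b * τ a) = τ a * τ b * τ a) ↔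
    (∀ a ∈ Set.Icc (0 : A) 1, ∃ b ∈ Set.Icc (0 : A) 1, (τ a) ^ 2 = τ b) := by
  have hconj : ∀ x ∈ Set.Icc (0 : A) 1, ∀ b ∈ Set.Icc (0 : A) 1,
      x * b * x ∈ Set.Icc (0 : A) 1 := by
    intro x hx b hb
    have hxsa := IsSelfAdjoint.of_nonneg hx.1
    refine ⟨hxsa.conjugate_nonneg hb.1, ?_⟩
    have h₁ : x * b * x ≤ x * 1 * x := hxsa.conjugate_le_conjugate hb.2
    have h₂ : 0 ≤ x * (1 - x) :=
      ((Commute.one_right x).sub_right (Commute.refl x)).mul_nonneg hx.1 (sub_nonneg.2 hx.2)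
    rw [mul_sub, mul_one, sub_nonneg] at h₂
    rw [mul_one] at h₁
    exact h₁.trans (h₂.trans hx.2)
  have h1 : (1 : A) ∈ Set.Icc (0 : A) 1 := ⟨zero_le_one, le_rfl⟩
  constructor
  · intro h a ha
    refine ⟨τ a * 1 * τ a, hconj _ (hmaps a ha) 1 h1, ?_⟩
    rw [h a ha 1 h1, hunital, mul_one, sq]
  · intro h a ha b hb
    obtain ⟨T, hTτ⟩ := exists_addMonoidHom_eqOn_Icc hunital hadd
    have hT : ∀ a, 0 ≤ a → 0 ≤ T a := fun a ha =>
      T.map_nonneg_of_Icc (fun a ha => hTτ a ha ▸ (hmaps a ha).1) ha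
    have hT1 : T 1 = 1 := by rw [hTτ 1 h1, hunital]
    have hfix : ∀ a ∈ Set.Icc (0 : A) 1, T (τ a) = τ a := fun a ha => by
      rw [hTτ _ (hmaps a ha), hidem a ha]
    obtain ⟨c, hc, hac⟩ := h a ha
    obtain ⟨d, hd, hcd⟩ := h c hc
    rw [← hTτ _ (hconj _ (hmaps a ha) b hb), ← hTτ b hb]
    exact AddMonoidHom.map_conjugate hT hT1 (.of_nonneg (hmaps a ha).1) (hfix a ha)
      (by rw [hac, hfix c hc]) (by rw [hac, hcd, hfix d hd]) (.of_nonneg hb.1)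
end

section
/- Let A be a unital C*-algebra, E(A) = {a ∈ A : 0 ≤ a ≤ 1}, and let τ : E(A) → E(A) be a state operator (unital, additive and idempotent) that is faithful: for a ∈ E(A), τ(a) = 0 implies a = 0. Then τ satisfies the conditional expectation property: τ(τ(a)·b·τ(a)) = τ(a)·τ(b)·τ(a) for all a, b ∈ E(A). -/
lemma nsmul_inv_natCast_smul {M : Type*} [AddCommGroup M] [Module ℝ M] {n : ℕ} (hn : n ≠ 0)
    (x : M) : n • ((n : ℝ)⁻¹ • x) = x := by
  rw [← Nat.cast_smul_eq_nsmul ℝ, smul_smul, mul_inv_cancel₀ (by exact_mod_cast hn), one_smul]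

section PositiveAdditiveMaps

variable {A : Type*} [CStarAlgebra A] [PartialOrder A] [StarOrderedRing A]

/-- The order of a C*-algebra is Archimedean. -/
lemma nonneg_of_forall_nsmul_add_nonneg_s8 {z w : A} (h : ∀ n : ℕ, 0 ≤ n • z + w) : 0 ≤ z := by
  have hlim : Filter.Tendsto (fun n : ℕ => z + ((n : ℝ) + 1)⁻¹ • w) Filter.atTop (nhds z) := by
    have h0 : Filter.Tendsto (fun n : ℕ => ((n : ℝ) + 1)⁻¹) Filter.atTop (nhds 0) := by
      simpa [one_div] using tendsto_one_div_add_atTop_nhds_zero_nat (𝕜 := ℝ)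
    simpa using tendsto_const_nhds.add (h0.smul_const w)
  refine ge_of_tendsto' hlim fun n => ?_
  have hn : ((n : ℝ) + 1) ≠ 0 := by positivity
  have hs : z + ((n : ℝ) + 1)⁻¹ • w = ((n : ℝ) + 1)⁻¹ • ((n + 1) • z + w) := by
    rw [smul_add, ← Nat.cast_smul_eq_nsmul ℝ (n + 1) z, smul_smul]
    push_cast
    rw [inv_mul_cancel₀ hn, one_smul]
  rw [hs]
  exact smul_nonneg (by positivity) (h (n + 1))

lemma nonneg_of_nsmul_nonneg {n : ℕ} (hn : n ≠ 0) {z : A} (h : 0 ≤ n • z) : 0 ≤ z := by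
  rw [← nsmul_inv_natCast_smul hn z, smul_comm]
  exact smul_nonneg (by positivity) h

lemma aeval_bernsteinPolynomial_nonneg {x : A} (hx : x ∈ Set.Icc (0 : A) 1) (n k : ℕ) :
    0 ≤ Polynomial.aeval x (bernsteinPolynomial ℤ n k) := by
  have hcomm : Commute (x ^ k) ((1 - x) ^ (n - k)) :=
    ((Commute.one_right x).sub_right (Commute.refl x)).pow_pow _ _
  have := hcomm.mul_nonneg (CStarAlgebra.pow_nonneg hx.1 k)
    (CStarAlgebra.pow_nonneg (sub_nonneg.2 hx.2) (n - k))
  simpa [bernsteinPolynomial, mul_assoc, ← nsmul_eq_mul] using nsmul_nonneg this (n.choose k)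

/-- Variance inequality for a finite family of positive elements with sum one. -/
lemma sum_nsmul_mul_self_le {s : Finset ℕ} {q : ℕ → A} (hq : ∀ k ∈ s, 0 ≤ q k)
    (hone : ∑ k ∈ s, q k = 1) :
    (∑ k ∈ s, k • q k) * (∑ k ∈ s, k • q k) ≤ ∑ k ∈ s, (k * k) • q k := by
  set y := ∑ k ∈ s, k • q k with hy
  have hysa : IsSelfAdjoint y :=
    .of_nonneg (Finset.sum_nonneg fun k hk => nsmul_nonneg (hq k hk) k)
  have hterm : ∀ k ∈ s, 0 ≤ ((k : A) - y) * q k * ((k : A) - y) := fun k hk =>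
    IsSelfAdjoint.conjugate_nonneg (hq k hk) ((IsSelfAdjoint.natCast k).sub hysa)
  have hexp : ∑ k ∈ s, ((k : A) - y) * q k * ((k : A) - y)
      = ∑ k ∈ s, (k * k) • q k - y * y := by
    have : ∀ k ∈ s, ((k : A) - y) * q k * ((k : A) - y)
        = (k * k) • q k - (k • q k) * y - y * (k • q k) + y * q k * y := by
      intro k _
      have hc : q k * (k : A) = k • q k := by rw [nsmul_eq_mul, Nat.cast_comm]
      have hc' : (k : A) * q k = k • q k := by rw [nsmul_eq_mul]
      rw [sub_mul, sub_mul, mul_sub, mul_sub, hc', mul_assoc y, hc, smul_mul_assoc, hc,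
        smul_smul]
      simp only [smul_mul_assoc]
      abel
    rw [Finset.sum_congr rfl this, Finset.sum_add_distrib, Finset.sum_sub_distrib,
      Finset.sum_sub_distrib, ← Finset.sum_mul, ← Finset.mul_sum, ← Finset.sum_mul,
      ← Finset.mul_sum, hone, ← hy]
    noncomm_ring
  rw [← sub_nonneg, ← hexp]
  exact Finset.sum_nonneg hterm


/-- Kadison's inequality for effects. -/
lemma map_mul_self_le_of_mem_Icc {T : A →+ A} (hpos : ∀ a, 0 ≤ a → 0 ≤ T a) (hT : T 1 = 1)
    {x : A} (hx : x ∈ Set.Icc (0 : A) 1) : T x * T x ≤ T (x * x) := by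
  rw [← sub_nonneg]
  refine nonneg_of_forall_nsmul_add_nonneg_s8 (w := T (x - x * x)) fun n => ?_
  rcases eq_or_ne n 0 with rfl | hn
  · have hcomm : Commute x (1 - x) := (Commute.one_right x).sub_right (Commute.refl x)
    simpa [mul_sub] using hpos _ (hcomm.mul_nonneg hx.1 (sub_nonneg.2 hx.2))
  let p : ℕ → A := fun k => Polynomial.aeval x (bernsteinPolynomial ℤ n k)
  have h0 : ∑ k ∈ Finset.range (n + 1), p k = 1 := by
    simp only [p]
    rw [← map_sum, bernsteinPolynomial.sum, map_one]
  have h1 : ∑ k ∈ Finset.range (n + 1), k • p k = n • x := by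
    have := congrArg (Polynomial.aeval x) (bernsteinPolynomial.sum_smul ℤ n)
    simpa only [map_sum, map_nsmul, Polynomial.aeval_X] using this
  have h2 : ∑ k ∈ Finset.range (n + 1), (k * k) • p k = (n * (n - 1)) • (x * x) + n • x := by
    have := congrArg (Polynomial.aeval x) (bernsteinPolynomial.sum_mul_smul ℤ n)
    simp only [map_sum, map_nsmul, map_pow, Polynomial.aeval_X, pow_two x] at this
    rw [← this, ← h1, ← Finset.sum_add_distrib]
    refine Finset.sum_congr rfl fun k _ => ?_
    rw [← add_smul]
    congr 1
    cases k with
    | zero => rfl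
    | succ k => simp; ring
  have hvar := sum_nsmul_mul_self_le (s := Finset.range (n + 1)) (q := fun k => T (p k))
    (fun k _ => hpos _ (aeval_bernsteinPolynomial_nonneg hx n k)) (by rw [← map_sum, h0, hT])
  simp only [← map_nsmul, ← map_sum, h1, h2] at hvar
  refine nonneg_of_nsmul_nonneg hn ?_
  convert sub_nonneg.2 hvar using 1
  obtain ⟨m, rfl⟩ := Nat.exists_eq_succ_of_ne_zero hn
  simp only [map_add, map_sub, map_nsmul, Nat.succ_eq_add_one, Nat.add_sub_cancel,
    smul_mul_smul_comm]
  module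

lemma IsSelfAdjoint.exists_natCast_bounds {x : A} (hx : IsSelfAdjoint x) :
    ∃ n : ℕ, n ≠ 0 ∧ 0 ≤ x + (n : A) ∧ x ≤ (n : A) := by
  obtain ⟨n, hn⟩ := exists_nat_gt ‖x‖
  have hle : algebraMap ℝ A ‖x‖ ≤ (n : A) := by
    rw [← map_natCast (algebraMap ℝ A) n]
    exact algebraMap_mono A hn.le
  refine ⟨n, ?_, ?_, hx.le_algebraMap_norm_self.trans hle⟩
  · rintro rfl
    exact absurd hn (by simp)
  · rw [← neg_le_iff_add_nonneg]
    exact (neg_le_neg hle).trans hx.neg_algebraMap_norm_le_self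

lemma inv_natCast_smul_mem_Icc {n : ℕ} (hn : n ≠ 0) {x : A} (h0 : 0 ≤ x) (h1 : x ≤ (n : A)) :
    (n : ℝ)⁻¹ • x ∈ Set.Icc (0 : A) 1 := by
  refine ⟨smul_nonneg (by positivity) h0, ?_⟩
  refine (smul_le_smul_of_nonneg_left h1 (by positivity)).trans_eq ?_
  rw [← nsmul_one (A := A) n, smul_comm, nsmul_inv_natCast_smul hn]

/-- Kadison's inequality for positive unital additive maps. -/
lemma map_mul_self_le {T : A →+ A} (hpos : ∀ a, 0 ≤ a → 0 ≤ T a) (hT : T 1 = 1)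
    {x : A} (hx : IsSelfAdjoint x) : T x * T x ≤ T (x * x) := by
  obtain ⟨n, hn, h0, h1⟩ := hx.exists_natCast_bounds
  obtain ⟨y, hy, hxy⟩ : ∃ y ∈ Set.Icc (0 : A) 1, x = (2 * n) • y - n • 1 := by
    refine ⟨((2 * n : ℕ) : ℝ)⁻¹ • (x + n), inv_natCast_smul_mem_Icc (by omega) h0 ?_, ?_⟩
    · rw [two_mul, Nat.cast_add]
      gcongr
    · rw [nsmul_inv_natCast_smul (by omega)]
      simp
  have hk := nsmul_nonneg (sub_nonneg.2 (map_mul_self_le_of_mem_Icc hpos hT hy)) (2 * n * (2 * n))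
  rw [← sub_nonneg]
  convert hk using 1
  rw [hxy]
  simp only [sub_mul, mul_sub, map_sub, map_nsmul, smul_mul_smul_comm, hT, mul_one, one_mul]
  module

/-- A positive unital additive map that satisfies `T (a * a) = a * a` at a fixed point `a` is
multiplicative for the Jordan product with `a`. -/
lemma map_jordan_of_map_mul_self {T : A →+ A} (hpos : ∀ a, 0 ≤ a → 0 ≤ T a) (hT : T 1 = 1)
    {a b : A} (ha : IsSelfAdjoint a) (hb : IsSelfAdjoint b) (hTa : T a = a)
    (hTaa : T (a * a) = a * a) : T (a * b + b * a) = a * T b + T b * a := by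
  have key : ∀ c : A, IsSelfAdjoint c → 0 ≤ T (a * c + c * a) - (a * T c + T c * a) := by
    intro c hc
    refine nonneg_of_forall_nsmul_add_nonneg_s8 (w := T (c * c) - T c * T c) fun n => ?_
    have hna : IsSelfAdjoint (n • a) := by
      rw [IsSelfAdjoint, star_nsmul, ha.star_eq]
    have := sub_nonneg.2 (map_mul_self_le hpos hT (hna.add hc))
    convert this using 1
    simp only [add_mul, mul_add, map_add, map_nsmul, smul_mul_assoc, mul_smul_comm, hTa, hTaa]
    module
  refine le_antisymm ?_ (sub_nonneg.1 (key b hb))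
  have := key (-b) hb.neg
  rw [← sub_nonneg]
  convert this using 1
  simp only [mul_neg, neg_mul, map_neg, map_add]
  abel

lemma map_mul_self_eq_of_faithful {T : A →+ A} (hpos : ∀ a, 0 ≤ a → 0 ≤ T a) (hT : T 1 = 1)
    (hidem : ∀ a, 0 ≤ a → T (T a) = T a) (hfaithful : ∀ a, 0 ≤ a → T a = 0 → a = 0)
    {a : A} (ha : IsSelfAdjoint a) (hTa : T a = a) : T (a * a) = a * a := by
  have hle : a * a ≤ T (a * a) := by simpa only [hTa] using map_mul_self_le hpos hT ha
  refine sub_eq_zero.1 (hfaithful _ (sub_nonneg.2 hle) ?_)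
  rw [map_sub, hidem _ ha.mul_self_nonneg, sub_self]

/-- A faithful positive unital additive projection commutes with the quadratic maps
`b ↦ a * b * a` of its fixed points `a`. -/
lemma map_mul_mul_of_faithful {T : A →+ A} (hpos : ∀ a, 0 ≤ a → 0 ≤ T a) (hT : T 1 = 1)
    (hidem : ∀ a, 0 ≤ a → T (T a) = T a) (hfaithful : ∀ a, 0 ≤ a → T a = 0 → a = 0)
    {a b : A} (ha : IsSelfAdjoint a) (hb : IsSelfAdjoint b) (hTa : T a = a) :
    T (a * b * a) = a * T b * a := by
  have hsq : ∀ {c : A}, IsSelfAdjoint c → T c = c → T (c * c) = c * c :=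
    map_mul_self_eq_of_faithful hpos hT hidem hfaithful
  have haa : IsSelfAdjoint (a * a) := .of_nonneg ha.mul_self_nonneg
  have hab : IsSelfAdjoint (a * b + b * a) := by
    rw [IsSelfAdjoint, star_add, star_mul, star_mul, ha.star_eq, hb.star_eq, add_comm]
  have h1 := map_jordan_of_map_mul_self hpos hT ha hab hTa (hsq ha hTa)
  have h2 := map_jordan_of_map_mul_self hpos hT haa hb (hsq ha hTa) (hsq haa (hsq ha hTa))
  rw [map_jordan_of_map_mul_self hpos hT ha hb hTa (hsq ha hTa)] at h1
  have hexp : ∀ c : A, 2 • (a * c * a)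
      = (a * (a * c + c * a) + (a * c + c * a) * a) - (a * a * c + c * (a * a)) := by
    intro c
    noncomm_ring
  have : (2 : ℝ) • T (a * b * a) = (2 : ℝ) • (a * T b * a) := by
    rw [ofNat_smul_eq_nsmul ℝ, ofNat_smul_eq_nsmul ℝ]
    change 2 • _ = 2 • _
    rw [← map_nsmul, hexp b, map_sub, h1, h2, hexp]
  exact smul_right_injective A two_ne_zero this

end PositiveAdditiveMaps

section Extension

variable {A : Type*} [CStarAlgebra A] [PartialOrder A] [StarOrderedRing A]

lemma map_nsmul_of_nsmul_mem_Icc {τ : A → A}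
    (hadd : ∀ a ∈ Set.Icc (0 : A) 1, ∀ b ∈ Set.Icc (0 : A) 1,
      a + b ∈ Set.Icc (0 : A) 1 → τ (a + b) = τ a + τ b)
    {y : A} (hy : 0 ≤ y) (k : ℕ) (hk : k • y ≤ 1) : τ (k • y) = k • τ y := by
  have hzero : τ 0 = 0 := by
    have h01 : (0 : A) ∈ Set.Icc (0 : A) 1 := ⟨le_rfl, (nsmul_nonneg hy k).trans hk⟩
    simpa using hadd 0 h01 0 h01 (by simp)
  induction k with
  | zero => simpa using hzero
  | succ k ih =>
    rw [succ_nsmul] at hk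
    have hk' : k • y ≤ 1 := (le_add_of_nonneg_right hy).trans hk
    have hky := nsmul_nonneg hy k
    rw [succ_nsmul, succ_nsmul, hadd _ ⟨hky, hk'⟩ _ ⟨hy, (le_add_of_nonneg_left hky).trans hk⟩
      ⟨add_nonneg hky hy, hk⟩, ih hk']

/-- A map that is additive on effects extends to the positive cone. -/
lemma exists_cone_extension {τ : A → A}
    (hadd : ∀ a ∈ Set.Icc (0 : A) 1, ∀ b ∈ Set.Icc (0 : A) 1,
      a + b ∈ Set.Icc (0 : A) 1 → τ (a + b) = τ a + τ b) :
    ∃ S : A → A, (∀ a ∈ Set.Icc (0 : A) 1, S a = τ a) ∧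
      ∀ a b, 0 ≤ a → 0 ≤ b → S (a + b) = S a + S b := by
  have indep : ∀ {m n : ℕ}, m ≠ 0 → n ≠ 0 → ∀ {p : A}, 0 ≤ p → p ≤ m →
      m • τ ((m : ℝ)⁻¹ • p) = (n * m) • τ (((n * m : ℕ) : ℝ)⁻¹ • p) := by
    intro m n hm hn p hp hpm
    have hy : (m : ℝ)⁻¹ • p = n • (((n * m : ℕ) : ℝ)⁻¹ • p) := by
      rw [Nat.cast_mul, mul_inv, mul_smul, nsmul_inv_natCast_smul hn]
    rw [hy, map_nsmul_of_nsmul_mem_Icc hadd (smul_nonneg (by positivity) hp) n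
      (hy ▸ (inv_natCast_smul_mem_Icc hm hp hpm).2), smul_smul, mul_comm]
  have bound : ∀ p : A, ∃ n : ℕ, n ≠ 0 ∧ (0 ≤ p → p ≤ n) := by
    intro p
    by_cases hp : 0 ≤ p
    · obtain ⟨n, hn, -, h⟩ := (IsSelfAdjoint.of_nonneg hp).exists_natCast_bounds
      exact ⟨n, hn, fun _ => h⟩
    · exact ⟨1, one_ne_zero, fun h => absurd h hp⟩
  choose N hN hle using bound
  let S : A → A := fun p => N p • τ ((N p : ℝ)⁻¹ • p)
  have hS : ∀ {n : ℕ}, n ≠ 0 → ∀ {p : A}, 0 ≤ p → p ≤ n → S p = n • τ ((n : ℝ)⁻¹ • p) := by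
    intro n hn p hp hpn
    simp only [S]
    rw [indep (hN p) hn hp (hle p hp), indep hn (hN p) hp hpn, mul_comm]
  refine ⟨S, fun a ha => ?_, fun a b ha hb => ?_⟩
  · simpa using hS one_ne_zero ha.1 (by simpa using ha.2)
  · have hab := hle _ (add_nonneg ha hb)
    have ha' := (le_add_of_nonneg_right hb).trans hab
    have hb' := (le_add_of_nonneg_left ha).trans hab
    have hn := hN (a + b)
    rw [hS hn ha ha', hS hn hb hb', hS hn (add_nonneg ha hb) hab, smul_add, ← nsmul_add]
    congr 1
    refine hadd _ (inv_natCast_smul_mem_Icc hn ha ha') _ (inv_natCast_smul_mem_Icc hn hb hb') ?_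
    rw [← smul_add]
    exact inv_natCast_smul_mem_Icc hn (add_nonneg ha hb) hab

/-- A map that is additive on effects extends to an additive endomorphism of the algebra. -/
lemma exists_addMonoidHom_extension {τ : A → A}
    (hadd : ∀ a ∈ Set.Icc (0 : A) 1, ∀ b ∈ Set.Icc (0 : A) 1,
      a + b ∈ Set.Icc (0 : A) 1 → τ (a + b) = τ a + τ b) :
    ∃ T : A →+ A, ∀ a ∈ Set.Icc (0 : A) 1, T a = τ a := by
  obtain ⟨S, hSτ, hS⟩ := exists_cone_extension hadd
  have bound : ∀ x : selfAdjoint A, ∃ p : A, 0 ≤ p ∧ 0 ≤ (x : A) + p := by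
    intro x
    obtain ⟨n, -, h, -⟩ := x.2.exists_natCast_bounds
    exact ⟨n, by simp, h⟩
  choose p hp hxp using bound
  let R : selfAdjoint A → A := fun x => S (x + p x) - S (p x)
  have hR : ∀ x y, R (x + y) = R x + R y := by
    intro x y
    have h : S ((x + y : selfAdjoint A) + p (x + y)) + (S (p x) + S (p y))
        = (S (x + p x) + S (y + p y)) + S (p (x + y)) := by
      rw [← hS _ _ (hp x) (hp y), ← hS _ _ (hxp _) (add_nonneg (hp x) (hp y)),
        ← hS _ _ (hxp x) (hxp y), ← hS _ _ (add_nonneg (hxp x) (hxp y)) (hp _)]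
      congr 1
      push_cast
      abel
    simp only [R]
    rw [sub_eq_iff_eq_add, ← add_left_inj (S (p x) + S (p y)), h]
    abel
  refine ⟨(AddMonoidHom.mk' R hR).comp (realPart (A := A)).toAddMonoidHom, fun a ha => ?_⟩
  have hre : ((realPart a : selfAdjoint A) : A) = a := (IsSelfAdjoint.of_nonneg ha.1).coe_realPart
  change S ((realPart a : selfAdjoint A) + p (realPart a)) - S (p (realPart a)) = τ a
  rw [hre, hS _ _ ha.1 (hp _), add_sub_cancel_right, hSτ a ha]

end Extension

/-- A faithful state operator on the effect algebra `E(A)` of a unital C*-algebra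
satisfies the conditional expectation property. -/
theorem faithful_stateOperator_is_conditionalExpectation
    (A : Type*) [CStarAlgebra A] [PartialOrder A] [StarOrderedRing A]
    (τ : A → A)
    (hmaps : ∀ a ∈ Set.Icc (0 : A) 1, τ a ∈ Set.Icc (0 : A) 1)
    (hunital : τ 1 = 1)
    (hadd : ∀ a ∈ Set.Icc (0 : A) 1, ∀ b ∈ Set.Icc (0 : A) 1,
      a + b ∈ Set.Icc (0 : A) 1 → τ (a + b) = τ a + τ b)
    (hidem : ∀ a ∈ Set.Icc (0 : A) 1, τ (τ a) = τ a)
    (hfaithful : ∀ a ∈ Set.Icc (0 : A) 1, τ a = 0 → a = 0) :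
    ∀ a ∈ Set.Icc (0 : A) 1, ∀ b ∈ Set.Icc (0 : A) 1,
      τ (τ a * b * τ a) = τ a * τ b * τ a := by
  obtain ⟨T, hTτ⟩ := exists_addMonoidHom_extension hadd
  have h1 : (1 : A) ∈ Set.Icc (0 : A) 1 := ⟨zero_le_one, le_rfl⟩
  have scale : ∀ p : A, 0 ≤ p → ∃ n : ℕ, n ≠ 0 ∧ ∃ e ∈ Set.Icc (0 : A) 1, p = n • e := by
    intro p hp
    obtain ⟨n, hn, -, h⟩ := (IsSelfAdjoint.of_nonneg hp).exists_natCast_bounds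
    exact ⟨n, hn, _, inv_natCast_smul_mem_Icc hn hp h, (nsmul_inv_natCast_smul hn p).symm⟩
  have hpos : ∀ p, 0 ≤ p → 0 ≤ T p := by
    intro p hp
    obtain ⟨n, -, e, he, rfl⟩ := scale p hp
    rw [map_nsmul, hTτ e he]
    exact nsmul_nonneg (hmaps e he).1 n
  have hTidem : ∀ p, 0 ≤ p → T (T p) = T p := by
    intro p hp
    obtain ⟨n, -, e, he, rfl⟩ := scale p hp
    rw [map_nsmul, map_nsmul, hTτ e he, hTτ _ (hmaps e he), hidem e he]
  have hTfaithful : ∀ p, 0 ≤ p → T p = 0 → p = 0 := by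
    intro p hp h0
    obtain ⟨n, hn, e, he, rfl⟩ := scale p hp
    rw [map_nsmul, hTτ e he, ← Nat.cast_smul_eq_nsmul ℝ, smul_eq_zero] at h0
    rw [hfaithful e he (h0.resolve_left (by exact_mod_cast hn)), smul_zero]
  intro a ha b hb
  have hτa := hmaps a ha
  have hmem : τ a * b * τ a ∈ Set.Icc (0 : A) 1 := by
    refine ⟨conjugate_nonneg_of_nonneg hb.1 hτa.1, ?_⟩
    calc τ a * b * τ a ≤ τ a * 1 * τ a := conjugate_le_conjugate_of_nonneg hb.2 hτa.1
      _ = τ a ^ 2 := by rw [mul_one, pow_two]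
      _ ≤ 1 := by
        rw [← CStarAlgebra.norm_le_one_iff_of_nonneg _ (CStarAlgebra.pow_nonneg hτa.1 2)]
        exact (norm_pow_le' _ two_pos).trans (pow_le_one₀ (norm_nonneg _)
          ((CStarAlgebra.norm_le_one_iff_of_nonneg _ hτa.1).2 hτa.2))
  rw [← hTτ _ hmem, ← hTτ b hb]
  exact map_mul_mul_of_faithful hpos (by rw [hTτ 1 h1, hunital]) hTidem hTfaithful
    (.of_nonneg hτa.1) (.of_nonneg hb.1) (by rw [hTτ _ hτa, hidem a ha])
end

section
/- Let A be a unital C*-algebra, E(A) = {a ∈ A : 0 ≤ a ≤ 1}, and let τ : E(A) → E(A) satisfy τ(1) = 1, τ(a+b) = τ(a)+τ(b) whenever a, b and a+b all lie in E(A), and the Jordan condition τ(a²) = τ((τ(a))²) for every a ∈ E(A). Then: (i) τ is idempotent (τ(τ(a)) = τ(a) for all a ∈ E(A)), so τ is a state operator; (ii) for every a ∈ E(A), τ(a) = 0 if and only if τ(a²) = 0; (iii) if a ∈ E(A) satisfies τ(a) = 0, then τ(b·a·b) = 0 for every b ∈ E(A). -/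
section EffectAlgebra

open Set

variable {A : Type*} [CStarAlgebra A] [PartialOrder A] [StarOrderedRing A]

/-- The arithmetic mean of two elements. -/
noncomputable def halfSum (a b : A) : A := (1 / 2 : ℝ) • (a + b)

theorem halfSum_mem_Icc {a b : A} (ha : a ∈ Icc (0 : A) 1) (hb : b ∈ Icc (0 : A) 1) :
    halfSum a b ∈ Icc (0 : A) 1 := by
  refine ⟨smul_nonneg (by norm_num) (add_nonneg ha.1 hb.1), ?_⟩
  calc halfSum a b ≤ (1 / 2 : ℝ) • ((1 : A) + 1) :=
        smul_le_smul_of_nonneg_left (add_le_add ha.2 hb.2) (by norm_num)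
    _ = 1 := by module

theorem mul_mul_mem_Icc {a b : A} (ha : a ∈ Icc (0 : A) 1) (hb : b ∈ Icc (0 : A) 1) :
    b * a * b ∈ Icc (0 : A) 1 := by
  have hbs : IsSelfAdjoint b := .of_nonneg hb.1
  refine ⟨hbs.conjugate_nonneg ha.1, ?_⟩
  have h1 : b * a * b ≤ b * 1 * b := hbs.conjugate_le_conjugate ha.2
  have h2 : b ^ 2 ≤ b ^ 1 := CStarAlgebra.pow_antitone hb.1 hb.2 one_le_two
  calc b * a * b ≤ b ^ 2 := by simpa [sq] using h1
    _ ≤ b := by simpa using h2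
    _ ≤ 1 := hb.2

theorem sq_mem_Icc {a : A} (ha : a ∈ Icc (0 : A) 1) : a ^ 2 ∈ Icc (0 : A) 1 := by
  simpa [sq] using mul_mul_mem_Icc ⟨zero_le_one, le_rfl⟩ ha

/-- The Jordan product of two effects, rescaled affinely so as to be an effect. -/
noncomputable def jordanEffect (a b : A) : A := (1 / 2 : ℝ) • 1 + (1 / 4 : ℝ) • (a * b + b * a)

theorem jordanEffect_mem_Icc {a b : A} (ha : a ∈ Icc (0 : A) 1) (hb : b ∈ Icc (0 : A) 1) :
    jordanEffect a b ∈ Icc (0 : A) 1 := by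
  have has : IsSelfAdjoint a := .of_nonneg ha.1
  have hbs : IsSelfAdjoint b := .of_nonneg hb.1
  have hrest : 0 ≤ (1 - a ^ 2) + (1 - b ^ 2) :=
    add_nonneg (sub_nonneg.2 (sq_mem_Icc ha).2) (sub_nonneg.2 (sq_mem_Icc hb).2)
  have hpos {c : A} (hc : IsSelfAdjoint c) :
      0 ≤ (1 / 4 : ℝ) • (c ^ 2 + ((1 - a ^ 2) + (1 - b ^ 2))) :=
    smul_nonneg (by norm_num) (add_nonneg hc.sq_nonneg hrest)
  constructor
  · convert hpos (has.add hbs) using 1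
    simp only [jordanEffect, sq, mul_add, add_mul]
    module
  · rw [← sub_nonneg]
    convert hpos (has.sub hbs) using 1
    simp only [jordanEffect, sq, mul_sub, sub_mul]
    module

variable {τ : A → A}

theorem map_zero_of_additive_on_effects
    (hadd : ∀ a ∈ Icc (0 : A) 1, ∀ b ∈ Icc (0 : A) 1,
      a + b ∈ Icc (0 : A) 1 → τ (a + b) = τ a + τ b) : τ 0 = 0 := by
  have h0 : (0 : A) ∈ Icc (0 : A) 1 := ⟨le_rfl, zero_le_one⟩
  simpa using hadd 0 h0 0 h0 (by simp)

theorem map_halfSum_of_additive_on_effects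
    (hadd : ∀ a ∈ Icc (0 : A) 1, ∀ b ∈ Icc (0 : A) 1,
      a + b ∈ Icc (0 : A) 1 → τ (a + b) = τ a + τ b)
    {a b : A} (ha : a ∈ Icc (0 : A) 1) (hb : b ∈ Icc (0 : A) 1) :
    τ (halfSum a b) = halfSum (τ a) (τ b) := by
  have h0 : (0 : A) ∈ Icc (0 : A) 1 := ⟨le_rfl, zero_le_one⟩
  have hhalf {c : A} (hc : c ∈ Icc (0 : A) 1) : τ (halfSum c 0) = (1 / 2 : ℝ) • τ c := by
    have hsum : halfSum c 0 + halfSum c 0 = c := by simp only [halfSum]; module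
    have h := hadd _ (halfSum_mem_Icc hc h0) _ (halfSum_mem_Icc hc h0) (by rwa [hsum])
    rw [hsum] at h
    rw [h]
    module
  have hsum : halfSum a b = halfSum a 0 + halfSum b 0 := by simp only [halfSum]; module
  rw [hsum, hadd _ (halfSum_mem_Icc ha h0) _ (halfSum_mem_Icc hb h0)
    (hsum ▸ halfSum_mem_Icc ha hb), hhalf ha, hhalf hb, halfSum, smul_add]

theorem map_mono_of_additive_on_effects
    (hmaps : ∀ a ∈ Icc (0 : A) 1, τ a ∈ Icc (0 : A) 1)
    (hadd : ∀ a ∈ Icc (0 : A) 1, ∀ b ∈ Icc (0 : A) 1,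
      a + b ∈ Icc (0 : A) 1 → τ (a + b) = τ a + τ b)
    {a b : A} (ha : a ∈ Icc (0 : A) 1) (hb : b ∈ Icc (0 : A) 1) (hab : a ≤ b) : τ a ≤ τ b := by
  have hd : b - a ∈ Icc (0 : A) 1 := ⟨sub_nonneg.2 hab, (sub_le_self b ha.1).trans hb.2⟩
  have h := hadd _ ha _ hd (by simpa using hb)
  rw [add_sub_cancel] at h
  rw [h]
  exact le_add_of_nonneg_right (hmaps _ hd).1

theorem half_pow_smul_mem_Icc {a : A} (ha : a ∈ Icc (0 : A) 1) (n : ℕ) :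
    (1 / 2 : ℝ) ^ n • a ∈ Icc (0 : A) 1 := by
  induction n with
  | zero => simpa using ha
  | succ n ih =>
    convert halfSum_mem_Icc ih ⟨le_rfl, zero_le_one⟩ using 1
    simp only [halfSum]
    module

theorem map_half_pow_smul_of_additive_on_effects
    (hadd : ∀ a ∈ Icc (0 : A) 1, ∀ b ∈ Icc (0 : A) 1,
      a + b ∈ Icc (0 : A) 1 → τ (a + b) = τ a + τ b)
    {a : A} (ha : a ∈ Icc (0 : A) 1) (n : ℕ) :
    τ ((1 / 2 : ℝ) ^ n • a) = (1 / 2 : ℝ) ^ n • τ a := by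
  induction n with
  | zero => simp
  | succ n ih =>
    have h0 : (0 : A) ∈ Icc (0 : A) 1 := ⟨le_rfl, zero_le_one⟩
    have hstep (x : A) : (1 / 2 : ℝ) ^ (n + 1) • x = halfSum ((1 / 2 : ℝ) ^ n • x) 0 := by
      simp only [halfSum]; module
    rw [hstep, map_halfSum_of_additive_on_effects hadd (half_pow_smul_mem_Icc ha n) h0, ih,
      map_zero_of_additive_on_effects hadd, hstep]

theorem map_eq_zero_of_map_sq_eq_zero
    (hmaps : ∀ a ∈ Icc (0 : A) 1, τ a ∈ Icc (0 : A) 1) (hunital : τ 1 = 1)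
    (hadd : ∀ a ∈ Icc (0 : A) 1, ∀ b ∈ Icc (0 : A) 1,
      a + b ∈ Icc (0 : A) 1 → τ (a + b) = τ a + τ b)
    {a : A} (ha : a ∈ Icc (0 : A) 1) (h : τ (a ^ 2) = 0) : τ a = 0 := by
  have h1 : (1 : A) ∈ Icc (0 : A) 1 := ⟨zero_le_one, le_rfl⟩
  have has : IsSelfAdjoint a := .of_nonneg ha.1
  have hle (n : ℕ) : τ a ≤ (1 / 2 : ℝ) ^ n • (1 : A) := by
    have hsq : (1 / 2 : ℝ) ^ n • a ≤ halfSum (a ^ 2) ((1 / 2 : ℝ) ^ (2 * n) • 1) := by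
      rw [← sub_nonneg]
      have hs : IsSelfAdjoint (a - (1 / 2 : ℝ) ^ n • 1) :=
        has.sub (.smul (.all _) (.one A))
      convert smul_nonneg (by norm_num : (0 : ℝ) ≤ 1 / 2) hs.sq_nonneg using 1
      simp only [halfSum, sq, mul_sub, sub_mul, mul_smul_comm, smul_mul_assoc, mul_one, one_mul]
      module
    have hmono := map_mono_of_additive_on_effects hmaps hadd (half_pow_smul_mem_Icc ha n)
      (halfSum_mem_Icc (sq_mem_Icc ha) (half_pow_smul_mem_Icc h1 (2 * n))) hsq
    rw [map_halfSum_of_additive_on_effects hadd (sq_mem_Icc ha) (half_pow_smul_mem_Icc h1 (2 * n)),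
      map_half_pow_smul_of_additive_on_effects hadd ha,
      map_half_pow_smul_of_additive_on_effects hadd h1, h, hunital] at hmono
    have hscale := smul_le_smul_of_nonneg_left hmono (by positivity : (0 : ℝ) ≤ 2 ^ n)
    have hpow : (2 : ℝ) ^ n * (1 / 2) ^ n = 1 := by rw [← mul_pow]; norm_num
    calc τ a = (2 : ℝ) ^ n • (1 / 2 : ℝ) ^ n • τ a := by rw [smul_smul, hpow, one_smul]
      _ ≤ _ := hscale
      _ = ((1 / 2 : ℝ) * (1 / 2) ^ n) • (1 : A) := by
        rw [halfSum, zero_add, smul_smul, smul_smul]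
        congr 1
        linear_combination (1 / 2 : ℝ) * (1 / 2) ^ n * hpow
      _ ≤ (1 / 2 : ℝ) ^ n • (1 : A) :=
        smul_le_smul_of_nonneg_right
          (mul_le_of_le_one_left (by positivity) (by norm_num)) zero_le_one
  have hlim : Filter.Tendsto (fun n : ℕ => (1 / 2 : ℝ) ^ n • (1 : A)) Filter.atTop (nhds 0) := by
    simpa using (tendsto_pow_atTop_nhds_zero_of_lt_one (by norm_num : (0 : ℝ) ≤ 1 / 2)
      (by norm_num)).smul_const (1 : A)
  exact le_antisymm (ge_of_tendsto' hlim hle) (hmaps a ha).1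

theorem map_map_of_jordan
    (hmaps : ∀ a ∈ Icc (0 : A) 1, τ a ∈ Icc (0 : A) 1) (hunital : τ 1 = 1)
    (hadd : ∀ a ∈ Icc (0 : A) 1, ∀ b ∈ Icc (0 : A) 1,
      a + b ∈ Icc (0 : A) 1 → τ (a + b) = τ a + τ b)
    (hjordan : ∀ a ∈ Icc (0 : A) 1, τ (a ^ 2) = τ (τ a ^ 2))
    {a : A} (ha : a ∈ Icc (0 : A) 1) : τ (τ a) = τ a := by
  have h1 : (1 : A) ∈ Icc (0 : A) 1 := ⟨zero_le_one, le_rfl⟩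
  have hsq (c : A) : halfSum c 1 ^ 2 = halfSum (halfSum (c ^ 2) 1) c := by
    simp only [halfSum, sq, mul_add, add_mul, mul_smul_comm, smul_mul_assoc, mul_one, one_mul]
    module
  have hmap {c : A} (hc : c ∈ Icc (0 : A) 1) :
      τ (halfSum c 1 ^ 2) = halfSum (halfSum (τ (c ^ 2)) 1) (τ c) := by
    rw [hsq, map_halfSum_of_additive_on_effects hadd (halfSum_mem_Icc (sq_mem_Icc hc) h1) hc,
      map_halfSum_of_additive_on_effects hadd (sq_mem_Icc hc) h1, hunital]
  have h := hjordan _ (halfSum_mem_Icc ha h1)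
  rw [map_halfSum_of_additive_on_effects hadd ha h1, hunital, hmap ha, hmap (hmaps a ha),
    ← hjordan a ha] at h
  simp only [halfSum] at h
  linear_combination (norm := module) (-2 : ℝ) • h

theorem map_jordanEffect_of_map_eq_zero
    (hmaps : ∀ a ∈ Icc (0 : A) 1, τ a ∈ Icc (0 : A) 1) (hunital : τ 1 = 1)
    (hadd : ∀ a ∈ Icc (0 : A) 1, ∀ b ∈ Icc (0 : A) 1,
      a + b ∈ Icc (0 : A) 1 → τ (a + b) = τ a + τ b)
    (hjordan : ∀ a ∈ Icc (0 : A) 1, τ (a ^ 2) = τ (τ a ^ 2))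
    {a b : A} (ha : a ∈ Icc (0 : A) 1) (hb : b ∈ Icc (0 : A) 1) (h : τ a = 0) :
    τ (jordanEffect a b) = halfSum 1 0 := by
  have h0 : (0 : A) ∈ Icc (0 : A) 1 := ⟨le_rfl, zero_le_one⟩
  have h1 : (1 : A) ∈ Icc (0 : A) 1 := ⟨zero_le_one, le_rfl⟩
  have hτ0 : τ 0 = 0 := map_zero_of_additive_on_effects hadd
  have hmid {c d : A} (hc : c ∈ Icc (0 : A) 1) (hd : d ∈ Icc (0 : A) 1) :
      τ (halfSum c d) = halfSum (τ c) (τ d) := map_halfSum_of_additive_on_effects hadd hc hd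
  have ha2 := sq_mem_Icc ha
  have hb2 := sq_mem_Icc hb
  have hτa2 : τ (a ^ 2) = 0 := by rw [hjordan a ha, h, zero_pow two_ne_zero, hτ0]
  have hab := halfSum_mem_Icc ha hb
  have hτb2 := sq_mem_Icc (hmaps b hb)
  have hX : τ (halfSum a b ^ 2) = halfSum (halfSum (τ (b ^ 2)) 0) 0 := by
    have hsq : halfSum 0 (τ b) ^ 2 = halfSum (halfSum (τ b ^ 2) 0) 0 := by
      simp only [halfSum, sq, zero_add, add_zero, mul_smul_comm, smul_mul_assoc]
    rw [hjordan _ hab, hmid ha hb, h, hsq, hmid (halfSum_mem_Icc hτb2 h0) h0, hmid hτb2 h0, hτ0,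
      ← hjordan b hb]
  have hdecomp : halfSum (halfSum a b ^ 2) (halfSum 1 0) =
      halfSum (jordanEffect a b) (halfSum (halfSum (a ^ 2) (b ^ 2)) 0) := by
    simp only [halfSum, jordanEffect, sq, mul_add, add_mul, mul_smul_comm, smul_mul_assoc]
    module
  have hτ := congrArg τ hdecomp
  rw [hmid (sq_mem_Icc hab) (halfSum_mem_Icc h1 h0), hX, hmid h1 h0,
    hmid (jordanEffect_mem_Icc ha hb) (halfSum_mem_Icc (halfSum_mem_Icc ha2 hb2) h0),
    hmid (halfSum_mem_Icc ha2 hb2) h0, hmid ha2 hb2, hτ0, hτa2, hunital] at hτ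
  simp only [halfSum] at hτ ⊢
  linear_combination (norm := module) (-2 : ℝ) • hτ

theorem map_mul_mul_eq_zero_of_map_eq_zero
    (hmaps : ∀ a ∈ Icc (0 : A) 1, τ a ∈ Icc (0 : A) 1) (hunital : τ 1 = 1)
    (hadd : ∀ a ∈ Icc (0 : A) 1, ∀ b ∈ Icc (0 : A) 1,
      a + b ∈ Icc (0 : A) 1 → τ (a + b) = τ a + τ b)
    (hjordan : ∀ a ∈ Icc (0 : A) 1, τ (a ^ 2) = τ (τ a ^ 2))
    {a b : A} (ha : a ∈ Icc (0 : A) 1) (hb : b ∈ Icc (0 : A) 1) (h : τ a = 0) :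
    τ (b * a * b) = 0 := by
  have h0 : (0 : A) ∈ Icc (0 : A) 1 := ⟨le_rfl, zero_le_one⟩
  have h1 : (1 : A) ∈ Icc (0 : A) 1 := ⟨zero_le_one, le_rfl⟩
  have hτ0 : τ 0 = 0 := map_zero_of_additive_on_effects hadd
  have hmid {c d : A} (hc : c ∈ Icc (0 : A) 1) (hd : d ∈ Icc (0 : A) 1) :
      τ (halfSum c d) = halfSum (τ c) (τ d) := map_halfSum_of_additive_on_effects hadd hc hd
  have hb2 := sq_mem_Icc hb
  have hτb := hmaps b hb
  have hbab := mul_mul_mem_Icc ha hb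
  have hhalf := halfSum_mem_Icc h1 h0
  have hτhalf : τ (halfSum 1 0) = halfSum 1 0 := by rw [hmid h1 h0, hunital, hτ0]
  have hquarter := halfSum_mem_Icc hhalf h0
  have hf := jordanEffect_mem_Icc ha hb
  have hg := jordanEffect_mem_Icc ha hb2
  have hτf := map_jordanEffect_of_map_eq_zero hmaps hunital hadd hjordan ha hb h
  have hτg := map_jordanEffect_of_map_eq_zero hmaps hunital hadd hjordan ha hb2 h
  have hsqhalf : (halfSum 1 0 : A) ^ 2 = halfSum (halfSum 1 0) 0 := by
    simp only [halfSum, sq, add_zero, mul_smul_comm, mul_one]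
  have hτf2 : τ (jordanEffect a b ^ 2) = halfSum (halfSum 1 0) 0 := by
    rw [hjordan _ hf, hτf, hsqhalf, hmid hhalf h0, hτhalf, hτ0]
  have hY : τ (halfSum (jordanEffect a b) b ^ 2) =
      halfSum (halfSum (halfSum (halfSum 1 0) 0) (τ (b ^ 2))) (halfSum (τ b) 0) := by
    have hsq : halfSum (halfSum 1 0) (τ b) ^ 2 =
        halfSum (halfSum (halfSum (halfSum 1 0) 0) (τ b ^ 2)) (halfSum (τ b) 0) := by
      simp only [halfSum, sq, add_zero, mul_add, add_mul, mul_smul_comm, smul_mul_assoc, mul_one,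
        one_mul]
      module
    rw [hjordan _ (halfSum_mem_Icc hf hb), hmid hf hb, hτf, hsq,
      hmid (halfSum_mem_Icc hquarter (sq_mem_Icc hτb)) (halfSum_mem_Icc hτb h0),
      hmid hquarter (sq_mem_Icc hτb), hmid hhalf h0, hmid hτb h0, hτhalf, hτ0, ← hjordan b hb,
      map_map_of_jordan hmaps hunital hadd hjordan hb]
  have hdecomp : halfSum (halfSum (jordanEffect a b) b ^ 2) (halfSum (halfSum (halfSum 1 0) 0) 0) =
      halfSum (halfSum (halfSum (jordanEffect a b ^ 2) (b ^ 2)) (halfSum b (jordanEffect a (b ^ 2))))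
        (halfSum (halfSum (halfSum (b * a * b) 0) 0) 0) := by
    simp only [halfSum, jordanEffect, sq, add_zero, mul_add, add_mul, mul_smul_comm,
      smul_mul_assoc, mul_one, one_mul, mul_assoc]
    module
  have hbab' := halfSum_mem_Icc hbab h0
  have hτ := congrArg τ hdecomp
  rw [hmid (sq_mem_Icc (halfSum_mem_Icc hf hb)) (halfSum_mem_Icc hquarter h0), hY,
    hmid hquarter h0, hmid hhalf h0, hτhalf,
    hmid (halfSum_mem_Icc (halfSum_mem_Icc (sq_mem_Icc hf) hb2) (halfSum_mem_Icc hb hg))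
      (halfSum_mem_Icc (halfSum_mem_Icc hbab' h0) h0),
    hmid (halfSum_mem_Icc (sq_mem_Icc hf) hb2) (halfSum_mem_Icc hb hg),
    hmid (sq_mem_Icc hf) hb2, hmid hb hg, hmid (halfSum_mem_Icc hbab' h0) h0, hmid hbab' h0,
    hmid hbab h0, hτ0, hτf2, hτg] at hτ
  simp only [halfSum] at hτ
  linear_combination (norm := module) (-16 : ℝ) • hτ

end EffectAlgebra

/-- A unital additive map `τ` on the effect algebra `E(A)` of a unital C*-algebra
satisfying the Jordan condition `τ (a²) = τ ((τ a)²)` is: (i) idempotent (hence a state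
operator); (ii) satisfies `τ a = 0 ↔ τ (a²) = 0`; and (iii) `τ a = 0` implies
`τ (b · a · b) = 0` for every effect `b`. -/
theorem jordan_stateOperator_properties
    (A : Type*) [CStarAlgebra A] [PartialOrder A] [StarOrderedRing A]
    (τ : A → A)
    (hmaps : ∀ a ∈ Set.Icc (0 : A) 1, τ a ∈ Set.Icc (0 : A) 1)
    (hunital : τ 1 = 1)
    (hadd : ∀ a ∈ Set.Icc (0 : A) 1, ∀ b ∈ Set.Icc (0 : A) 1,
      a + b ∈ Set.Icc (0 : A) 1 → τ (a + b) = τ a + τ b)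
    (hjordan : ∀ a ∈ Set.Icc (0 : A) 1, τ (a ^ 2) = τ ((τ a) ^ 2)) :
    (∀ a ∈ Set.Icc (0 : A) 1, τ (τ a) = τ a) ∧
    (∀ a ∈ Set.Icc (0 : A) 1, (τ a = 0 ↔ τ (a ^ 2) = 0)) ∧
    (∀ a ∈ Set.Icc (0 : A) 1, τ a = 0 → ∀ b ∈ Set.Icc (0 : A) 1, τ (b * a * b) = 0) := by
  have hτ0 : τ 0 = 0 := map_zero_of_additive_on_effects hadd
  refine ⟨fun a ha => map_map_of_jordan hmaps hunital hadd hjordan ha, fun a ha => ⟨fun h => ?_,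
    map_eq_zero_of_map_sq_eq_zero hmaps hunital hadd ha⟩, fun a ha h b hb =>
    map_mul_mul_eq_zero_of_map_eq_zero hmaps hunital hadd hjordan ha hb h⟩
  rw [hjordan a ha, h, zero_pow two_ne_zero, hτ0]
end

section
/- Let X be a nonempty compact Hausdorff space and let T : C(X,ℝ) → C(X,ℝ) be a linear map that is positive (0 ≤ f implies 0 ≤ T(f)), unital (T(1) = 1, where 1 is the constant function one), and idempotent (T(T(f)) = T(f) for all f). Then the following are equivalent: (a) T((T(f))²) = (T(f))² for every f ∈ C(X,ℝ); (b) T(T(f) ⊓ T(g)) = T(f) ⊓ T(g) for every f, g ∈ C(X,ℝ), where ⊓ denotes the pointwise minimum. -/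
/-- Applying a unital linear map to `(f - a)²` and evaluating at `x`. -/
theorem map_sub_const_sq_apply {X : Type*} [TopologicalSpace X]
    (T : C(X, ℝ) →ₗ[ℝ] C(X, ℝ)) (hunital : T 1 = 1) (f : C(X, ℝ)) (a : ℝ) (x : X) :
    T ((f - a • (1 : C(X, ℝ))) ^ 2) x = T (f ^ 2) x - 2 * a * T f x + a ^ 2 := by
  have expand : (f - a • (1 : C(X, ℝ))) ^ 2
      = f ^ 2 - (2 * a) • f + (a ^ 2) • (1 : C(X, ℝ)) := by
    ext y
    simp
    ring
  rw [expand]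
  simp [hunital]

theorem monotone_of_map_nonneg {X : Type*} [TopologicalSpace X]
    (T : C(X, ℝ) →ₗ[ℝ] C(X, ℝ)) (hpos : ∀ f : C(X, ℝ), 0 ≤ f → 0 ≤ T f) : Monotone T := by
  intro f g hfg
  have h := hpos (g - f) (sub_nonneg.mpr hfg)
  rwa [map_sub, sub_nonneg] at h

/-- If the squares of two fixed points of a positive unital linear map are fixed, then so is
their minimum. -/
theorem map_inf_eq_of_map_sq_eq {X : Type*} [TopologicalSpace X]
    (T : C(X, ℝ) →ₗ[ℝ] C(X, ℝ)) (hpos : ∀ f : C(X, ℝ), 0 ≤ f → 0 ≤ T f) (hunital : T 1 = 1)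
    {f g : C(X, ℝ)} (hf : T f = f) (hg : T g = g) (hf2 : T (f ^ 2) = f ^ 2)
    (hg2 : T (g ^ 2) = g ^ 2) : T (f ⊓ g) = f ⊓ g := by
  have mono := monotone_of_map_nonneg T hpos
  refine le_antisymm (le_inf ((mono inf_le_left).trans_eq hf) ((mono inf_le_right).trans_eq hg)) ?_
  rw [ContinuousMap.le_def]
  intro x
  refine le_of_forall_pos_le_add fun ε hε => ?_
  -- `|t| ≤ ε / 2 + t² / (2 ε)` bounds the oscillation of `f ⊓ g` by squares vanishing at `x`.
  have bound : (min (f x) (g x) - ε) • (1 : C(X, ℝ)) ≤ f ⊓ g +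
      (1 / (2 * ε)) • ((f - f x • (1 : C(X, ℝ))) ^ 2 + (g - g x • (1 : C(X, ℝ))) ^ 2) := by
    rw [ContinuousMap.le_def]
    intro y
    have young (t : ℝ) : -t ≤ ε / 2 + 1 / (2 * ε) * t ^ 2 := by
      have : ε / 2 + 1 / (2 * ε) * t ^ 2 + t = (ε + t) ^ 2 / (2 * ε) := by
        field_simp
        ring
      have : 0 ≤ (ε + t) ^ 2 / (2 * ε) := by positivity
      linarith
    have sq_term_nonneg (t : ℝ) : 0 ≤ 1 / (2 * ε) * t ^ 2 := by positivity
    have hfy := young (f y - f x)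
    have hgy := young (g y - g x)
    have hfy' := sq_term_nonneg (f y - f x)
    have hgy' := sq_term_nonneg (g y - g x)
    have hmf := min_le_left (f x) (g x)
    have hmg := min_le_right (f x) (g x)
    simp only [ContinuousMap.add_apply, ContinuousMap.smul_apply, ContinuousMap.one_apply,
      ContinuousMap.inf_apply, ContinuousMap.pow_apply, ContinuousMap.sub_apply, smul_eq_mul,
      mul_one, mul_add]
    rcases min_choice (f y) (g y) with h | h <;> rw [h] <;> linarith
  have key := ContinuousMap.le_def.mp (mono bound) x
  simp only [map_add, map_smul, hunital, ContinuousMap.add_apply, ContinuousMap.smul_apply,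
    map_sub_const_sq_apply T hunital, hf, hg, hf2, hg2, ContinuousMap.one_apply,
    ContinuousMap.pow_apply, smul_eq_mul] at key
  rw [ContinuousMap.inf_apply]
  ring_nf at key
  linarith

/-- If a positive unital linear map on `C(X, ℝ)` fixes `f` and all `|f - a|`, then it
fixes `f ^ 2`. -/
theorem map_sq_eq_of_map_abs_eq {X : Type*} [TopologicalSpace X] [CompactSpace X]
    (T : C(X, ℝ) →ₗ[ℝ] C(X, ℝ)) (hpos : ∀ f : C(X, ℝ), 0 ≤ f → 0 ≤ T f) (hunital : T 1 = 1)
    {f : C(X, ℝ)} (hf : T f = f)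
    (habs : ∀ a : ℝ, T |f - a • (1 : C(X, ℝ))| = |f - a • (1 : C(X, ℝ))|) :
    T (f ^ 2) = f ^ 2 := by
  ext x
  set k := f - f x • (1 : C(X, ℝ)) with hk
  have bound : k ^ 2 ≤ ‖k‖ • |k| := by
    rw [ContinuousMap.le_def]
    intro y
    have := mul_le_mul_of_nonneg_right (k.norm_coe_le_norm y) (abs_nonneg (k y))
    simpa [← sq] using this
  have sq_nonneg_k : 0 ≤ k ^ 2 := by
    rw [ContinuousMap.le_def]
    intro y
    simpa using sq_nonneg (k y)
  have upper := ContinuousMap.le_def.mp (monotone_of_map_nonneg T hpos bound) x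
  have lower := ContinuousMap.le_def.mp (hpos (k ^ 2) sq_nonneg_k) x
  have expand := map_sub_const_sq_apply T hunital f (f x) x
  rw [← hk, hf] at expand
  have hkx : k x = 0 := by simp [hk]
  rw [map_smul, habs, ← hk, ContinuousMap.smul_apply, ContinuousMap.abs_apply, hkx, abs_zero,
    smul_zero] at upper
  rw [ContinuousMap.zero_apply] at lower
  rw [ContinuousMap.pow_apply]
  linarith

/-- For a positive unital idempotent linear map `T` on `C(X,ℝ)`, `X` a nonempty
compact Hausdorff space, the following are equivalent: (a) `T ((T f)²) = (T f)²` for all `f`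
(the induced state operator on `C₁(X)` is a conditional expectation); (b)
`T (T f ⊓ T g) = T f ⊓ T g` for all `f, g` (the induced state operator is strong). -/
theorem conditionalExpectation_iff_strong_on_CX
    (X : Type*) [TopologicalSpace X] [CompactSpace X] [T2Space X] [Nonempty X]
    (T : C(X, ℝ) →ₗ[ℝ] C(X, ℝ))
    (hpos : ∀ f : C(X, ℝ), 0 ≤ f → 0 ≤ T f)
    (hunital : T 1 = 1)
    (hidem : ∀ f : C(X, ℝ), T (T f) = T f) :
    (∀ f : C(X, ℝ), T ((T f) ^ 2) = (T f) ^ 2) ↔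
    (∀ f g : C(X, ℝ), T (T f ⊓ T g) = T f ⊓ T g) := by
  constructor
  · intro h f g
    exact map_inf_eq_of_map_sq_eq T hpos hunital (hidem f) (hidem g) (h f) (h g)
  · intro h f
    refine map_sq_eq_of_map_abs_eq T hpos hunital (hidem f) fun a => ?_
    have hk : T (f - a • (1 : C(X, ℝ))) = T f - a • (1 : C(X, ℝ)) := by
      rw [map_sub, map_smul, hunital]
    have inf_fixed := h (f - a • (1 : C(X, ℝ))) (-(f - a • (1 : C(X, ℝ))))
    rw [map_neg, hk] at inf_fixed
    have habs (u : C(X, ℝ)) : |u| = -(u ⊓ -u) := by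
      rw [neg_inf, neg_neg, sup_comm, abs]
    rw [habs, map_neg, inf_fixed]
end

section
/- Let X be a nonempty compact Hausdorff space and let T : C(X,ℝ) → C(X,ℝ) be a linear map that is positive (0 ≤ f implies 0 ≤ T(f)), unital (T(1) = 1) and idempotent (T(T(f)) = T(f) for all f). Then: (i) for every f ∈ C(X,ℝ) with 0 ≤ f, one has T(f) = 0 if and only if T(f²) = 0; (ii) the set I = {f ∈ C(X,ℝ) : T(f²) = 0} is an ideal of the ring C(X,ℝ) and is closed with respect to the supremum norm. -/
namespace ContinuousMap

variable {X : Type*} [TopologicalSpace X]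

/-- The kernel of a monotone linear map is solid: it contains every nonnegative function dominated
by a multiple of one of its elements. -/
theorem map_eq_zero_of_le_smul {T : C(X, ℝ) →ₗ[ℝ] C(X, ℝ)} (hT : Monotone T) {f g : C(X, ℝ)}
    {c : ℝ} (hf : 0 ≤ f) (hfg : f ≤ c • g) (hg : T g = 0) : T f = 0 := by
  refine le_antisymm ?_ ?_
  · simpa [hg] using hT hfg
  · simpa using hT hf

/-- For a monotone unital linear map, `T (f ^ 2) = 0` forces `T f ≤ 0`, because
`2 ε f ≤ f ^ 2 + ε ^ 2` for every `ε`. -/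
theorem map_nonpos_of_map_sq_eq_zero {T : C(X, ℝ) →ₗ[ℝ] C(X, ℝ)} (hT : Monotone T)
    (hone : T 1 = 1) {f : C(X, ℝ)} (hf : T (f ^ 2) = 0) : T f ≤ 0 := by
  refine le_def.mpr fun x => le_of_forall_pos_le_add fun ε hε => ?_
  have hle : (2 * ε) • f ≤ f ^ 2 + (ε ^ 2) • (1 : C(X, ℝ)) := le_def.mpr fun y => by
    simpa using (by nlinarith [sq_nonneg (f y - ε)] : 2 * ε * f y ≤ f y ^ 2 + ε ^ 2)
  have hx : 2 * ε * T f x ≤ ε ^ 2 := by simpa [hf, hone] using le_def.mp (hT hle) x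
  rw [zero_apply, zero_add]
  nlinarith

variable [CompactSpace X]

/-- A monotone unital linear map on `C(X, ℝ)` is a contraction, hence continuous. -/
theorem continuous_of_monotone_of_map_one {T : C(X, ℝ) →ₗ[ℝ] C(X, ℝ)} (hT : Monotone T)
    (hone : T 1 = 1) : Continuous T := by
  refine AddMonoidHomClass.continuous_of_bound T 1 fun f => ?_
  rw [one_mul, norm_le _ (norm_nonneg f)]
  intro x
  have hle : f ≤ ‖f‖ • (1 : C(X, ℝ)) := fun y => by simpa using f.apply_le_norm y
  have hge : (-‖f‖) • (1 : C(X, ℝ)) ≤ f := fun y => by simpa using f.neg_norm_le_apply y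
  rw [Real.norm_eq_abs, abs_le]
  exact ⟨by simpa [hone] using hT hge x, by simpa [hone] using hT hle x⟩

/-- The ideal of all `f` such that the monotone linear map `T` vanishes at `f ^ 2`. -/
def squareKernelIdeal (T : C(X, ℝ) →ₗ[ℝ] C(X, ℝ)) (hT : Monotone T) : Ideal C(X, ℝ) where
  carrier := {f | T (f ^ 2) = 0}
  zero_mem' := by simp
  add_mem' {f g} hf hg := by
    refine map_eq_zero_of_le_smul hT (g := f ^ 2 + g ^ 2) (c := 2) (fun x => sq_nonneg _)
      (fun x => ?_) ?_
    · simpa [mul_add] using add_sq_le (a := f x) (b := g x)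
    · rw [map_add, hf, hg, add_zero]
  smul_mem' h f hf := by
    refine map_eq_zero_of_le_smul hT (c := ‖h‖ ^ 2) (fun x => sq_nonneg _) (fun x => ?_) hf
    have hx : h x ^ 2 ≤ ‖h‖ ^ 2 := sq_le_sq' (h.neg_norm_le_apply x) (h.apply_le_norm x)
    simpa [mul_pow] using mul_le_mul_of_nonneg_right hx (sq_nonneg (f x))

end ContinuousMap


/-- For a positive unital idempotent linear map `T` on `C(X,ℝ)`, `X` a nonempty
compact Hausdorff space: (i) for `0 ≤ f`, `T f = 0 ↔ T (f²) = 0`; (ii) the set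
`{f | T (f²) = 0}` is a (topologically closed) ring ideal of `C(X,ℝ)`. -/
theorem kernel_ideal_of_stateOperator_on_CX
    (X : Type*) [TopologicalSpace X] [CompactSpace X] [T2Space X] [Nonempty X]
    (T : C(X, ℝ) →ₗ[ℝ] C(X, ℝ))
    (hpos : ∀ f : C(X, ℝ), 0 ≤ f → 0 ≤ T f)
    (hunital : T 1 = 1)
    (hidem : ∀ f : C(X, ℝ), T (T f) = T f) :
    (∀ f : C(X, ℝ), 0 ≤ f → (T f = 0 ↔ T (f ^ 2) = 0)) ∧
    (∃ I : Ideal C(X, ℝ), (I : Set C(X, ℝ)) = {f : C(X, ℝ) | T (f ^ 2) = 0}) ∧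
    IsClosed {f : C(X, ℝ) | T (f ^ 2) = 0} := by
  have hT : Monotone T := fun f g hfg => by
    simpa using hpos (g - f) (sub_nonneg.mpr hfg)
  refine ⟨fun f hf => ⟨fun h => ?_, fun h => ?_⟩,
    ⟨ContinuousMap.squareKernelIdeal T hT, rfl⟩, ?_⟩
  · refine ContinuousMap.map_eq_zero_of_le_smul hT (c := ‖f‖) (fun x => sq_nonneg (f x))
      (fun x => ?_) h
    simpa [sq] using mul_le_mul_of_nonneg_right (f.apply_le_norm x) (hf x)
  · exact le_antisymm (ContinuousMap.map_nonpos_of_map_sq_eq_zero hT hunital h) (hpos f hf)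
  · exact isClosed_eq ((ContinuousMap.continuous_of_monotone_of_map_one hT hunital).comp
      (continuous_pow 2)) continuous_const
end

section
/- Let X be a nonempty compact Hausdorff space and let T : C(X,ℝ) → C(X,ℝ) be a linear map that is positive (0 ≤ f implies 0 ≤ T(f)) and unital (T(1) = 1). Then the following are equivalent: (a) T(f²) = T((T(f))²) for every f ∈ C(X,ℝ) (i.e., T restricts to a Jordan state operator on C₁(X)); (b) there exist a nonempty closed subset K ⊆ X and a positive unital linear map Φ : C(K,ℝ) → C(X,ℝ) such that Φ(g) restricted to K equals g for every g ∈ C(K,ℝ), and T(f) = Φ(f restricted to K) for every f ∈ C(X,ℝ). -/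
section PositiveMaps

variable {X : Type*} [TopologicalSpace X] {T : C(X, ℝ) →ₗ[ℝ] C(X, ℝ)}

theorem positive_map_mono (hpos : ∀ f : C(X, ℝ), 0 ≤ f → 0 ≤ T f) {f g : C(X, ℝ)}
    (h : f ≤ g) : T f ≤ T g := by
  have := hpos (g - f) (sub_nonneg.2 h)
  rwa [map_sub, sub_nonneg] at this

/-- If `f` vanishes on the common zero set of the nonnegative functions annihilated by a positive
unital map `T`, then `f ≤ ε + g` for some `g` with `T g = 0`, and hence `T f ≤ 0`. -/
theorem positive_map_nonpos_of_zero_on_common_zeros [CompactSpace X]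
    (hpos : ∀ f : C(X, ℝ), 0 ≤ f → 0 ≤ T f) (hunital : T 1 = 1) (f : C(X, ℝ))
    (hf : ∀ x, (∀ g : C(X, ℝ), 0 ≤ g → T g = 0 → g x = 0) → f x = 0) : T f ≤ 0 := by
  refine ContinuousMap.le_def.2 fun x => ?_
  refine le_of_forall_pos_le_add fun ε hε => ?_
  have hloc : ∀ y, ∃ g : C(X, ℝ), 0 ≤ g ∧ T g = 0 ∧ f y < ε + g y := by
    intro y
    by_cases hy : ∀ g : C(X, ℝ), 0 ≤ g → T g = 0 → g y = 0
    · exact ⟨0, le_rfl, map_zero T, by simpa [hf y hy] using hε⟩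
    · push Not at hy
      obtain ⟨g, hg, hTg, hgy⟩ := hy
      refine ⟨(|f y| / g y) • g, smul_nonneg (div_nonneg (abs_nonneg _) (hg y)) hg,
        by rw [map_smul, hTg, smul_zero], ?_⟩
      rw [ContinuousMap.smul_apply, smul_eq_mul, div_mul_cancel₀ _ hgy]
      linarith [le_abs_self (f y)]
  choose g hg hTg hlt using hloc
  obtain ⟨t, ht⟩ := CompactSpace.elim_nhds_subcover (fun y => {z | f z < ε + g y z})
    fun y => (isOpen_lt f.continuous (by fun_prop)).mem_nhds (hlt y)
  have hle : f ≤ ε • (1 : C(X, ℝ)) + ∑ y ∈ t, g y := by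
    refine ContinuousMap.le_def.2 fun z => ?_
    have hz : z ∈ ⋃ y ∈ t, {z | f z < ε + g y z} := ht ▸ trivial
    simp only [Set.mem_iUnion, Set.mem_ofPred_eq] at hz
    obtain ⟨y, hyt, hy⟩ := hz
    have hsum : g y z ≤ ∑ w ∈ t, g w z :=
      Finset.single_le_sum (f := fun w => g w z) (fun w _ => hg w z) hyt
    simp only [ContinuousMap.add_apply, ContinuousMap.smul_apply, ContinuousMap.one_apply,
      smul_eq_mul, mul_one, ContinuousMap.sum_apply]
    linarith
  have := positive_map_mono hpos hle x
  simpa [hunital, hTg] using this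

theorem positive_map_eq_zero_of_zero_on_common_zeros [CompactSpace X]
    (hpos : ∀ f : C(X, ℝ), 0 ≤ f → 0 ≤ T f) (hunital : T 1 = 1) (f : C(X, ℝ))
    (hf : ∀ x, (∀ g : C(X, ℝ), 0 ≤ g → T g = 0 → g x = 0) → f x = 0) : T f = 0 := by
  refine le_antisymm (positive_map_nonpos_of_zero_on_common_zeros hpos hunital f hf) ?_
  have := positive_map_nonpos_of_zero_on_common_zeros hpos hunital (-f)
    fun x hx => by simp [hf x hx]
  rwa [map_neg, neg_nonpos] at this

/-- The polarized form of the Jordan condition. -/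
theorem jordan_map_mul (hJ : ∀ f : C(X, ℝ), T (f ^ 2) = T ((T f) ^ 2)) (f g : C(X, ℝ)) :
    T (f * g) = T (T f * T g) := by
  have h := hJ (f + g)
  have e₁ : (f + g) ^ 2 = f ^ 2 + (2 : ℝ) • (f * g) + g ^ 2 := by
    rw [two_smul]; ring
  have e₂ : (T f + T g) ^ 2 = (T f) ^ 2 + (2 : ℝ) • (T f * T g) + (T g) ^ 2 := by
    rw [two_smul]; ring
  rw [map_add T f g, e₁, e₂] at h
  simp only [map_add, map_smul, hJ f, hJ g, add_left_inj, add_right_inj] at h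
  exact smul_right_injective _ (two_ne_zero' ℝ) h

theorem jordan_map_sq_sub (hunital : T 1 = 1)
    (hJ : ∀ f : C(X, ℝ), T (f ^ 2) = T ((T f) ^ 2)) (f : C(X, ℝ)) :
    T ((f - T f) ^ 2) = 0 := by
  have hidem : T (T f) = T f := by
    simpa [hunital] using (jordan_map_mul hJ f 1).symm
  rw [hJ, map_sub, hidem, sub_self]
  simp

end PositiveMaps

/-- A positive unital linear map `T` on `C(X,ℝ)`, `X` a nonempty compact
Hausdorff space, satisfies the Jordan condition `T (f²) = T ((T f)²)` for all `f` iff there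
are a nonempty closed set `K ⊆ X` and a positive unital linear extension map
`Φ : C(K,ℝ) → C(X,ℝ)` (i.e. `Φ g` restricted to `K` equals `g`) with `T f = Φ (f|_K)`. -/
theorem jordan_stateOperator_iff_extension_of_restriction
    (X : Type*) [TopologicalSpace X] [CompactSpace X] [T2Space X] [Nonempty X]
    (T : C(X, ℝ) →ₗ[ℝ] C(X, ℝ))
    (hpos : ∀ f : C(X, ℝ), 0 ≤ f → 0 ≤ T f)
    (hunital : T 1 = 1) :
    (∀ f : C(X, ℝ), T (f ^ 2) = T ((T f) ^ 2)) ↔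
    (∃ (K : Set X), K.Nonempty ∧ IsClosed K ∧
      ∃ Φ : C(K, ℝ) →ₗ[ℝ] C(X, ℝ),
        (∀ g : C(K, ℝ), 0 ≤ g → 0 ≤ Φ g) ∧
        Φ 1 = 1 ∧
        (∀ g : C(K, ℝ), (Φ g).restrict K = g) ∧
        (∀ f : C(X, ℝ), T f = Φ (f.restrict K))) := by
  constructor
  · intro hJ
    let K : Set X := {x | ∀ g : C(X, ℝ), 0 ≤ g → T g = 0 → g x = 0}
    have hvanish : ∀ f : C(X, ℝ), f.restrict K = 0 → T f = 0 := fun f hf =>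
      positive_map_eq_zero_of_zero_on_common_zeros hpos hunital f
        fun x hx => DFunLike.congr_fun hf (⟨x, hx⟩ : K)
    have hK : IsClosed K := by
      simp only [K, Set.ofPred_forall]
      exact isClosed_iInter fun g => isClosed_iInter fun _ => isClosed_iInter fun _ =>
        isClosed_eq g.continuous continuous_const
    have hfix : ∀ (f : C(X, ℝ)), (T f).restrict K = f.restrict K := by
      intro f
      ext x
      have h := x.2 ((f - T f) ^ 2)
        (ContinuousMap.le_def.2 fun y => by simpa using sq_nonneg (f y - T f y))
        (jordan_map_sq_sub hunital hJ f)
      exact (sub_eq_zero.1 (pow_eq_zero_iff two_ne_zero |>.1 h)).symm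
    let R : C(X, ℝ) →ₗ[ℝ] C(K, ℝ) :=
      { toFun := fun f => f.restrict K
        map_add' := fun _ _ => rfl
        map_smul' := fun _ _ => rfl }
    have hR : ∀ f, R f = f.restrict K := fun _ => rfl
    have hcongr : ∀ f g : C(X, ℝ), R f = R g → T f = T g := by
      intro f g h
      rw [← sub_eq_zero, ← map_sub]
      exact hvanish _ (by rw [← hR, map_sub, h, sub_self])
    obtain ⟨S, hS⟩ := R.exists_rightInverse_of_surjective
      (LinearMap.range_eq_top.2 fun g => g.exists_restrict_eq hK)
    have hRS : ∀ g, R (S g) = g := fun g => LinearMap.congr_fun hS g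
    refine ⟨K, ?_, hK, T ∘ₗ S, ?_, ?_, ?_, ?_⟩
    · by_contra hne
      rw [Set.not_nonempty_iff_eq_empty] at hne
      have h : T 1 = 0 := hvanish 1 <| by
        ext x
        exact absurd x.2 (by simp [hne])
      exact one_ne_zero (hunital.symm.trans h)
    · intro g hg
      rw [LinearMap.comp_apply, hcongr (S g) |S g|]
      · exact hpos _ (abs_nonneg _)
      · rw [hRS]
        ext x
        have hx : S g x = g x := DFunLike.congr_fun (hRS g) x
        change g x = |S g x|
        rw [hx]
        exact (abs_of_nonneg (hg x)).symm
    · rw [LinearMap.comp_apply, hcongr (S 1) 1 (hRS 1), hunital]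
    · intro g
      rw [LinearMap.comp_apply, hfix]
      exact hRS g
    · intro f
      exact hcongr _ _ (hRS _).symm
  · rintro ⟨K, -, -, Φ, -, -, hres, hT⟩ f
    rw [hT (f ^ 2), hT ((T f) ^ 2)]
    congr 1
    ext x
    have h : T f x = f x := by
      rw [hT f]
      exact DFunLike.congr_fun (hres (f.restrict K)) x
    simp [h]
end

section
/- Let X be a nonempty set and let N be a set of functions f : X → ℝ such that every f ∈ N satisfies 0 ≤ f(x) ≤ 1 for all x ∈ X, and: (1) every constant function with value c ∈ [0,1] belongs to N; (2) if f ∈ N then 1 − f ∈ N; (3) if f, g ∈ N then the function x ↦ min(f(x)+g(x), 1) belongs to N; (4) if f, g ∈ N then the pointwise minimum and the pointwise maximum of f and g belong to N; (5) if f ∈ N and c ∈ [0,1] then c·f ∈ N; (6) if (fₙ) is a sequence in N increasing pointwise to a function f, then f ∈ N. Let 𝔅 = {A ⊆ X : the indicator function of A belongs to N}. Then 𝔅 is a σ-algebra of subsets of X, and N is exactly the set of all 𝔅-measurable functions f : X → ℝ with 0 ≤ f ≤ 1. -/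
/-- A family of functions closed under binary maxima and limits of increasing sequences is closed
under pointwise least upper bounds of sequences. -/
theorem mem_of_forall_isLUB_range {X : Type*} {N : Set (X → ℝ)}
    (hmax : ∀ f ∈ N, ∀ g ∈ N, (fun x : X => max (f x) (g x)) ∈ N)
    (hlim : ∀ (F : ℕ → X → ℝ) (f : X → ℝ), (∀ n, F n ∈ N) →
      (∀ x : X, Monotone fun n => F n x) →
      (∀ x : X, Filter.Tendsto (fun n => F n x) Filter.atTop (nhds (f x))) →
      f ∈ N)
    {g : ℕ → X → ℝ} {f : X → ℝ} (hg : ∀ n, g n ∈ N)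
    (hf : ∀ x, IsLUB (Set.range fun n => g n x) (f x)) : f ∈ N := by
  have hmono : ∀ x, Monotone fun n => partialSups g n x :=
    fun x _ _ h => (partialSups g).monotone h x
  refine hlim (fun n => partialSups g n) f (fun n => ?_) hmono fun x => ?_
  · induction n with
    | zero => simpa using hg 0
    | succ n ih =>
      rw [← Order.succ_eq_add_one, partialSups_succ]
      exact hmax _ ih _ (hg _)
  · refine tendsto_atTop_isLUB (hmono x) ?_
    simp only [Pi.partialSups_apply]
    rw [IsLUB, upperBounds_range_partialSups]
    exact hf x

/-- In a family of functions closed under truncated addition and increasing limits, the support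
of a member has its indicator in the family. -/
theorem indicator_pos_mem {X : Type*} {N : Set (X → ℝ)}
    (hzero : (fun _ : X => (0 : ℝ)) ∈ N)
    (htruncadd : ∀ f ∈ N, ∀ g ∈ N, (fun x : X => min (f x + g x) 1) ∈ N)
    (hlim : ∀ (F : ℕ → X → ℝ) (f : X → ℝ), (∀ n, F n ∈ N) →
      (∀ x : X, Monotone fun n => F n x) →
      (∀ x : X, Filter.Tendsto (fun n => F n x) Filter.atTop (nhds (f x))) →
      f ∈ N)
    {g : X → ℝ} (hg : g ∈ N) (hg0 : ∀ x, 0 ≤ g x) :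
    {x | 0 < g x}.indicator (fun _ => (1 : ℝ)) ∈ N := by
  refine hlim (fun n x => min (n * g x) 1) _ (fun n => ?_) (fun x a b hab => ?_) fun x => ?_
  · induction n with
    | zero => simpa using hzero
    | succ n ih =>
      convert htruncadd _ ih _ hg using 2 with x
      have := hg0 x
      push_cast
      rcases le_total ((n : ℝ) * g x) 1 with h | h
      · rw [min_eq_left h, add_one_mul]
      · rw [min_eq_right h, min_eq_right, min_eq_right] <;> linarith
  · have := hg0 x
    dsimp only
    gcongr
  · rcases (hg0 x).eq_or_lt with h | h
    · simp [← h]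
    · refine tendsto_const_nhds.congr' ?_
      have hlarge : ∀ᶠ n : ℕ in Filter.atTop, 1 ≤ n * g x :=
        (tendsto_natCast_atTop_atTop.atTop_mul_const h).eventually_ge_atTop 1
      filter_upwards [hlarge] with n hn
      simp [h, hn]

/-- If `N` is a set of `[0,1]`-valued functions on `X` containing the constants
and closed under complement, truncated addition, pointwise min and max, multiplication by
constants in `[0,1]`, and pointwise limits of increasing sequences, then the collection
`𝔅 = {A | indicator of A ∈ N}` is a σ-algebra and `N` consists exactly of the
`𝔅`-measurable functions with values in `[0,1]`. -/
theorem convex_subtribe_is_measurable_functions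
    (X : Type*) [Nonempty X]
    (N : Set (X → ℝ))
    (hrange : ∀ f ∈ N, ∀ x : X, 0 ≤ f x ∧ f x ≤ 1)
    (hconst : ∀ c : ℝ, 0 ≤ c → c ≤ 1 → (fun _ : X => c) ∈ N)
    (hcompl : ∀ f ∈ N, (fun x : X => 1 - f x) ∈ N)
    (htruncadd : ∀ f ∈ N, ∀ g ∈ N, (fun x : X => min (f x + g x) 1) ∈ N)
    (hmin : ∀ f ∈ N, ∀ g ∈ N, (fun x : X => min (f x) (g x)) ∈ N)
    (hmax : ∀ f ∈ N, ∀ g ∈ N, (fun x : X => max (f x) (g x)) ∈ N)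
    (hsmul : ∀ f ∈ N, ∀ c : ℝ, 0 ≤ c → c ≤ 1 → (fun x : X => c * f x) ∈ N)
    (hlim : ∀ (F : ℕ → X → ℝ) (f : X → ℝ), (∀ n, F n ∈ N) →
      (∀ x : X, Monotone fun n => F n x) →
      (∀ x : X, Filter.Tendsto (fun n => F n x) Filter.atTop (nhds (f x))) →
      f ∈ N) :
    ∃ m : MeasurableSpace X,
      (∀ A : Set X, m.MeasurableSet' A ↔ A.indicator (fun _ => (1 : ℝ)) ∈ N) ∧
      (∀ f : X → ℝ, f ∈ N ↔ (@Measurable X ℝ m Real.measurableSpace f ∧ ∀ x : X, 0 ≤ f x ∧ f x ≤ 1)) := by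
  have hzero : (fun _ : X => (0 : ℝ)) ∈ N := hconst 0 le_rfl zero_le_one
  let m : MeasurableSpace X :=
    { MeasurableSet' := fun A => A.indicator (fun _ => (1 : ℝ)) ∈ N
      measurableSet_empty := by simpa using hzero
      measurableSet_compl := fun A hA => by
        convert hcompl _ hA using 2 with x
        by_cases hx : x ∈ A <;> simp [hx]
      measurableSet_iUnion := fun A hA => by
        refine mem_of_forall_isLUB_range hmax hlim hA fun x => ⟨?_, fun b hb => ?_⟩
        · rintro _ ⟨n, rfl⟩
          exact Set.indicator_le_indicator_of_subset (Set.subset_iUnion A n)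
            (fun _ => zero_le_one) x
        · by_cases hx : x ∈ ⋃ n, A n
          · obtain ⟨n, hn⟩ := Set.mem_iUnion.1 hx
            simpa [hx, hn] using hb ⟨n, rfl⟩
          · rw [Set.indicator_of_notMem hx]
            exact (hrange _ (hA 0) x).1.trans (hb ⟨0, rfl⟩) }
  refine ⟨m, fun A => Iff.rfl, fun f => ⟨fun hf => ⟨?_, hrange f hf⟩, fun ⟨hf, hf01⟩ => ?_⟩⟩
  · refine measurable_of_Ioi fun a => ?_
    rcases lt_or_ge a 0 with ha | ha
    · have huniv : f ⁻¹' Set.Ioi a = Set.univ :=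
        Set.eq_univ_of_forall fun x => ha.trans_le (hrange f hf x).1
      rw [huniv]
      exact MeasurableSet.univ
    rcases le_or_gt a 1 with ha1 | ha1
    · have hpos := hcompl _ (htruncadd _ (hcompl f hf) _ (hconst a ha ha1))
      have hset : f ⁻¹' Set.Ioi a = {x | 0 < 1 - min (1 - f x + a) 1} := by
        ext x
        simp only [Set.mem_preimage, Set.mem_Ioi, Set.mem_ofPred_eq, sub_pos, min_lt_iff, lt_irrefl,
          or_false]
        constructor <;> intro h <;> linarith
      rw [hset]
      exact indicator_pos_mem hzero htruncadd hlim hpos fun x => (hrange _ hpos x).1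
    · have hempty : f ⁻¹' Set.Ioi a = ∅ :=
        Set.eq_empty_of_forall_notMem fun x hx => (ha1.trans hx).not_ge (hrange f hf x).2
      rw [hempty]
      exact MeasurableSet.empty
  · obtain ⟨q, hq⟩ := exists_surjective_nat ℚ
    let c : ℕ → ℝ := fun n => max 0 (min (q n) 1)
    have hc0 : ∀ n, 0 ≤ c n := fun n => le_max_left _ _
    have hc1 : ∀ n, c n ≤ 1 := fun n => max_le zero_le_one (min_le_right _ _)
    have hmem : ∀ n, (fun x => c n * (f ⁻¹' Set.Ioi (c n)).indicator (fun _ => (1 : ℝ)) x) ∈ N :=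
      fun n => hsmul _ (hf measurableSet_Ioi) _ (hc0 n) (hc1 n)
    refine mem_of_forall_isLUB_range hmax hlim hmem fun x => ⟨?_, fun b hb => ?_⟩
    · rintro _ ⟨n, rfl⟩
      by_cases hx : c n < f x
      · simpa [hx] using hx.le
      · simpa [hx] using (hf01 x).1
    · by_contra! hlt
      obtain ⟨r, hbr, hrf⟩ := exists_rat_btwn hlt
      obtain ⟨n, rfl⟩ := hq r
      have hb0 : 0 ≤ b := (hrange _ (hmem 0) x).1.trans (hb ⟨0, rfl⟩)
      have hcn : c n = q n := by
        have := (hf01 x).2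
        simp only [c]
        rw [min_eq_left (by linarith), max_eq_right (by linarith)]
      have hle := hb ⟨n, rfl⟩
      simp only [hcn, Set.indicator, Set.mem_preimage, Set.mem_Ioi, hrf, if_true, mul_one] at hle
      linarith
end
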